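/- arXiv:0802.0584 — 2 statements merged into one kernel-verified Lean document; each statement's English description precedes it below -/
import Mathlib

section
/- Let u ∈ F₂ and let ψ = σψ₁, where ψ₁ is a chain of type (C1) containing at least ‖u‖+1 factors of σ. If ‖τψ(u)‖ = ‖ψ(u)‖, then ‖σ^{i+1}ψ₁(u)‖ = ‖σ^{i}ψ₁(u)‖ for every integer i ≥ 0. -/
noncomputable section

/-- The free group of rank two. -/
abbrev F : Type := FreeGroup (Fin 2)

/-- The generator `a`. -/
def ga : F := FreeGroup.of 0

/-- The generator `b`. -/
def gb : F := FreeGroup.of 1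

/-- Build an automorphism of `F` from images of the generators together with
an explicit inverse. -/
def mkAut (x y xi yi : F)
    (h1 : FreeGroup.lift ![xi, yi] x = ga)
    (h2 : FreeGroup.lift ![xi, yi] y = gb)
    (h3 : FreeGroup.lift ![x, y] xi = ga)
    (h4 : FreeGroup.lift ![x, y] yi = gb) : MulAut F :=
  MonoidHom.toMulEquiv (FreeGroup.lift ![x, y]) (FreeGroup.lift ![xi, yi])
    (by
      ext i
      fin_cases i
      · simpa [ga] using h1
      · simpa [gb] using h2)
    (by
      ext i
      fin_cases i
      · simpa [ga] using h3
      · simpa [gb] using h4)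

/-- `σ : a ↦ ab, b ↦ b`. -/
def σ : MulAut F :=
  mkAut (ga * gb) gb (ga * gb⁻¹) gb
    (by simp [ga, gb]) (by simp [ga, gb]) (by simp [ga, gb]) (by simp [ga, gb])

/-- `τ : a ↦ a, b ↦ ba`. -/
def τ : MulAut F :=
  mkAut ga (gb * ga) ga (gb * ga⁻¹)
    (by simp [ga, gb]) (by simp [ga, gb]) (by simp [ga, gb]) (by simp [ga, gb])

/-- `δ₁ : a ↦ b⁻¹ab, b ↦ b`. -/
def δ₁ : MulAut F :=
  mkAut (gb⁻¹ * ga * gb) gb (gb * ga * gb⁻¹) gb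
    (by simp [ga, gb, mul_assoc]) (by simp [ga, gb]) (by simp [ga, gb, mul_assoc]) (by simp [ga, gb])

/-- `δ₂ : a ↦ bab⁻¹, b ↦ b`. -/
def δ₂ : MulAut F :=
  mkAut (gb * ga * gb⁻¹) gb (gb⁻¹ * ga * gb) gb
    (by simp [ga, gb, mul_assoc]) (by simp [ga, gb]) (by simp [ga, gb, mul_assoc]) (by simp [ga, gb])

/-- `δ₃ : a ↦ a, b ↦ a⁻¹ba`. -/
def δ₃ : MulAut F :=
  mkAut ga (ga⁻¹ * gb * ga) ga (ga * gb * ga⁻¹)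
    (by simp [ga, gb]) (by simp [ga, gb, mul_assoc]) (by simp [ga, gb]) (by simp [ga, gb, mul_assoc])

/-- `δ₄ : a ↦ a, b ↦ aba⁻¹`. -/
def δ₄ : MulAut F :=
  mkAut ga (ga * gb * ga⁻¹) ga (ga⁻¹ * gb * ga)
    (by simp [ga, gb]) (by simp [ga, gb, mul_assoc]) (by simp [ga, gb]) (by simp [ga, gb, mul_assoc])

/-- `π : a ↦ b, b ↦ a⁻¹`. -/
def pi' : MulAut F :=
  mkAut gb ga⁻¹ gb⁻¹ ga
    (by simp [ga, gb]) (by simp [ga, gb]) (by simp [ga, gb]) (by simp [ga, gb])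

/-- Word length of (the reduced word representing) an element of `F`. -/
def len (w : F) : ℕ := w.toWord.length

/-- Cyclic length: minimal word length among all conjugates. -/
def cyclen (w : F) : ℕ := sInf {n | ∃ g : F, len (g * w * g⁻¹) = n}

/-- The chain `τ^{m_k}σ^{l_k}⋯τ^{m_1}σ^{l_1}` of type (C1) determined by the list
`[(l_k, m_k), …, (l_1, m_1)]` of pairs of exponents. -/
def chainC1 (c : List (ℕ × ℕ)) : MulAut F :=
  (c.map fun p => τ ^ p.2 * σ ^ p.1).prod

/-- The chain `τ^{-m_k}σ^{-l_k}⋯τ^{-m_1}σ^{-l_1}` of type (C2) determined by the list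
`[(l_k, m_k), …, (l_1, m_1)]` of pairs of exponents. -/
def chainC2 (c : List (ℕ × ℕ)) : MulAut F :=
  (c.map fun p => (τ ^ p.2)⁻¹ * (σ ^ p.1)⁻¹).prod

/-- Number of factors of `σ` in a chain. -/
def sigmaCount (c : List (ℕ × ℕ)) : ℕ := (c.map Prod.fst).sum

/-- Number of factors of `τ` in a chain. -/
def tauCount (c : List (ℕ × ℕ)) : ℕ := (c.map Prod.snd).sum

/-- The length `Σ (l_i + m_i)` of a chain. -/
def chainLen (c : List (ℕ × ℕ)) : ℕ := sigmaCount c + tauCount c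

/-- A Whitehead automorphism of type (W1): it permutes `{a, a⁻¹, b, b⁻¹}`. -/
def IsW1 (β : MulAut F) : Prop :=
  β ga ∈ ({ga, ga⁻¹, gb, gb⁻¹} : Set F) ∧ β gb ∈ ({ga, ga⁻¹, gb, gb⁻¹} : Set F)

/-- A chain of type (C1). -/
def IsC1 (φ : MulAut F) : Prop := ∃ c : List (ℕ × ℕ), c ≠ [] ∧ φ = chainC1 c

/-- A chain of type (C2). -/
def IsC2 (φ : MulAut F) : Prop := ∃ c : List (ℕ × ℕ), c ≠ [] ∧ φ = chainC2 c

/-- A positive element: a product of the generators `a` and `b`. -/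
def IsPositive (w : F) : Prop := w ∈ Submonoid.closure ({ga, gb} : Set F)

/-- The four automorphisms `δ₁, δ₂, δ₃, δ₄`. -/
def δIdx : Fin 4 → MulAut F := ![δ₁, δ₂, δ₃, δ₄]

abbrev Ltr : Type := Fin 2 × Bool

def rt (i : Fin 2) (x : Ltr) : List Ltr :=
  if x.2 then (if x.1 = i then [x] else [x, (i, true)]) else []

def lf (i : Fin 2) (y : Ltr) : List Ltr :=
  if y.2 then [] else (if y.1 = i then [y] else [(i, false), y])

def emi (i : Fin 2) (x y : Ltr) : List Ltr :=
  if x.2 then (if y.2 then rt i x else (if x.1 = i then [y] else [x])) else lf i y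

def HH (i : Fin 2) : Ltr → List Ltr → List Ltr
  | x, [] => rt i x
  | x, y :: l => emi i x y ++ HH i y l

def tsub (i : Fin 2) : F →* F :=
  FreeGroup.lift (fun k => if k = i then FreeGroup.of k else FreeGroup.of k * FreeGroup.of i)

def tn : List Ltr → ℕ
  | [] => 0
  | [_] => 0
  | x :: y :: l => (if x.2 = true ∧ y.2 = false then 1 else 0) + tn (y :: l)

def cost (i : Fin 2) (y : Ltr) : ℕ := if y.1 = i then 1 else 2

def hc (i : Fin 2) (x z : Ltr) : Prop :=
  (x.2 = true → x.1 = i → (z.1 = i ∧ z.2 = true ∨ z.1 ≠ i ∧ z.2 = false)) ∧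
  (x.2 = true → x.1 ≠ i → z = x) ∧
  (x.2 = false → x.1 = i → (z = x ∨ (z.1 ≠ i ∧ z.2 = true))) ∧
  (x.2 = false → x.1 ≠ i → ¬ (z.1 ≠ i ∧ z.2 = true))

instance (i : Fin 2) (x z : Ltr) : Decidable (hc i x z) := by unfold hc; infer_instance

abbrev okp (a b : Ltr) : Prop := a.1 = b.1 → a.2 = b.2

theorem em_red1 : ∀ (i : Fin 2) (x y z : Ltr), okp x y → hc i y z →
    (emi i x y ++ [z]).IsChain okp := by
  decide

theorem em_red2 : ∀ (i : Fin 2) (x y z : Ltr), okp x y → hc i y z →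
    (∀ w ∈ (emi i x y ++ [z]).head?, hc i x w) := by
  decide

theorem em_red (i : Fin 2) (x y z : Ltr) (h : okp x y) (h' : hc i y z) :
    (emi i x y ++ [z]).IsChain okp ∧ (∀ w ∈ (emi i x y ++ [z]).head?, hc i x w) :=
  ⟨em_red1 i x y z h h', em_red2 i x y z h h'⟩

theorem em_red' : ∀ (i : Fin 2) (x y : Ltr), okp x y → y.2 = false →
    (emi i x y).IsChain okp ∧ (∀ w ∈ (emi i x y).head?, hc i x w) := by
  decide

theorem rt_red : ∀ (i : Fin 2) (x : Ltr), 
    (rt i x).IsChain okp ∧ (∀ w ∈ (rt i x).head?, hc i x w) ∧ (x.2 = true → rt i x ≠ []) := by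
  decide

theorem em_mul : ∀ (i : Fin 2) (x y : Ltr), okp x y →
    FreeGroup.reduce (rt i x ++ lf i y) = FreeGroup.reduce (emi i x y) := by
  decide

theorem em_len : ∀ (i : Fin 2) (x y : Ltr), okp x y →
    (emi i x y).length + 2 * (if x.2 = true ∧ y.2 = false then 1 else 0) + (rt i y).length = (rt i x).length + cost i y := by
  decide

theorem em_ne : ∀ (i : Fin 2) (x y : Ltr), x.2 = true → emi i x y ≠ [] := by
  decide

theorem mk_lf_rt (i : Fin 2) (y : Ltr) :
    (FreeGroup.mk (lf i y) * FreeGroup.mk (rt i y) : F) = tsub i (FreeGroup.mk [y]) := by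
  have h : ∀ (i : Fin 2) (y : Ltr), FreeGroup.mk (lf i y ++ rt i y) = tsub i (FreeGroup.mk [y]) := by
    rintro i ⟨k, b⟩
    simp only [tsub, FreeGroup.lift_mk, lf, rt]
    cases b <;> by_cases hk : k = i <;> simp [hk, FreeGroup.of, FreeGroup.invRev]
  rw [FreeGroup.mul_mk]; exact h i y

theorem HH_ne (i : Fin 2) (x : Ltr) (L : List Ltr) (hx : x.2 = true) : HH i x L ≠ [] := by
  cases L with
  | nil => exact (rt_red i x).2.2 hx
  | cons y l => simp [HH, em_ne i x y hx]

theorem HH_main (i : Fin 2) (L : List Ltr) : ∀ x : Ltr, (x :: L).IsChain okp →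
    FreeGroup.mk (HH i x L) = FreeGroup.mk (rt i x) * tsub i (FreeGroup.mk L) ∧
    (HH i x L).IsChain okp ∧ (∀ w ∈ (HH i x L).head?, hc i x w) ∧
    (HH i x L).length + 2 * tn (x :: L) = (rt i x).length + (L.map (cost i)).sum := by
  induction L with
  | nil =>
    intro x _
    refine ⟨?_, (rt_red i x).1, (rt_red i x).2.1, by simp [HH, tn]⟩
    rw [← FreeGroup.one_eq_mk, map_one, mul_one]; rfl
  | cons y l ih =>
    intro x hx
    rw [List.isChain_cons_cons] at hx
    obtain ⟨hxy, hl⟩ := hx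
    obtain ⟨h1, h2, h3, h4⟩ := ih y hl
    have hlen := em_len i x y hxy
    have key : (emi i x y ++ HH i y l).IsChain okp ∧
        (∀ w ∈ (emi i x y ++ HH i y l).head?, hc i x w) := by
      rcases hH : HH i y l with _ | ⟨z, t⟩
      · have hy : y.2 = false := by
          by_contra hy
          exact HH_ne i y l (by simpa using hy) hH
        simpa using em_red' i x y hxy hy
      · rw [hH] at h2 h3
        obtain ⟨e1, e2⟩ := em_red i x y z hxy (h3 z (by simp))
        refine ⟨List.isChain_split.2 ⟨e1, h2⟩, ?_⟩
        intro w hw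
        apply e2 w
        cases hem : emi i x y with
        | nil => simpa [hem] using hw
        | cons p q => simpa [hem] using hw
    refine ⟨?_, key.1, key.2, ?_⟩
    · have e : (FreeGroup.mk (y :: l) : F) = FreeGroup.mk [y] * FreeGroup.mk l := by
        rw [FreeGroup.mul_mk]; rfl
      rw [HH, ← FreeGroup.mul_mk, h1, e, map_mul, ← mk_lf_rt,
        ← FreeGroup.reduce.exact (em_mul i x y hxy), ← FreeGroup.mul_mk]
      group
    · simp only [HH, List.length_append, tn, List.map_cons, List.sum_cons]
      omega

theorem HH_last (i : Fin 2) (w : Ltr) (L : List Ltr) : ∀ x : Ltr, (x :: L).getLast? = some w →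
    ∃ Z, HH i x L = Z ++ rt i w := by
  induction L with
  | nil => intro x h; simp at h; subst h; exact ⟨[], rfl⟩
  | cons y l ih =>
    intro x h
    obtain ⟨Z, hZ⟩ := ih y (by simpa using h)
    exact ⟨emi i x y ++ Z, by simp [HH, hZ]⟩


theorem tau_eq (x : F) : τ x = tsub 0 x := by
  have : (τ : MulAut F).toMonoidHom = tsub 0 := by
    ext i; fin_cases i <;> simp [τ, mkAut, tsub, ga, gb]
  exact DFunLike.congr_fun this x

theorem sigma_eq (x : F) : σ x = tsub 1 x := by
  have : (σ : MulAut F).toMonoidHom = tsub 1 := by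
    ext i; fin_cases i <;> simp [σ, mkAut, tsub, ga, gb]
  exact DFunLike.congr_fun this x

theorem len_mk_le (L : List Ltr) : len (FreeGroup.mk L) ≤ L.length := FreeGroup.norm_mk_le

theorem len_mul_le (x y : F) : len (x * y) ≤ len x + len y := FreeGroup.norm_mul_le x y

theorem len_inv (x : F) : len x⁻¹ = len x := FreeGroup.norm_inv_eq

theorem len_mk_red (L : List Ltr) (h : L.IsChain okp) : len (FreeGroup.mk L) = L.length := by
  unfold len
  rw [FreeGroup.toWord_mk, FreeGroup.IsReduced.reduce_eq h]

theorem cyclen_spec (x : F) : ∃ g : F, len (g * x * g⁻¹) = cyclen x :=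
  Nat.sInf_mem (s := {n | ∃ g : F, len (g * x * g⁻¹) = n}) ⟨_, 1, rfl⟩

theorem cyclen_le (x g : F) : cyclen x ≤ len (g * x * g⁻¹) := Nat.sInf_le ⟨g, rfl⟩

theorem cyclen_le_len (x : F) : cyclen x ≤ len x := by simpa using cyclen_le x 1

theorem cyclen_conj_le {x y : F} (h : IsConj x y) : cyclen x ≤ cyclen y := by
  obtain ⟨c, rfl⟩ := isConj_iff.1 h
  obtain ⟨g, hg⟩ := cyclen_spec (c * x * c⁻¹)
  rw [← hg]
  have := cyclen_le x (g * c)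
  rwa [show g * c * x * (g * c)⁻¹ = g * (c * x * c⁻¹) * g⁻¹ by group] at this

theorem cyclen_conj {x y : F} (h : IsConj x y) : cyclen x = cyclen y :=
  le_antisymm (cyclen_conj_le h) (cyclen_conj_le h.symm)

theorem len_pow_le (x : F) (n : ℕ) : len (x ^ n) ≤ n * len x := by
  induction n with
  | zero => simp [len]
  | succ n ih =>
    rw [pow_succ]
    have := len_mul_le (x ^ n) x
    rw [Nat.succ_mul]; omega

theorem cyclen_lower (y : F) (K c : ℕ) (h : ∀ n : ℕ, n * K ≤ len (y ^ n) + c) : K ≤ cyclen y := by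
  obtain ⟨g, hg⟩ := cyclen_spec y
  by_contra hlt
  push Not at hlt
  set M := c + 2 * len g + 1 with hM
  have h1 := h M
  have h2 : len (y ^ M) ≤ len g + (M * cyclen y + len g) := by
    have e : y ^ M = g⁻¹ * ((g * y * g⁻¹) ^ M * g) := by
      rw [conj_pow]; group
    rw [e, ← hg]
    have a1 := len_mul_le g⁻¹ ((g * y * g⁻¹) ^ M * g)
    have a2 := len_mul_le ((g * y * g⁻¹) ^ M) g
    have a3 := len_pow_le (g * y * g⁻¹) M
    rw [len_inv] at a1
    omega
  have h3 : M * (cyclen y + 1) ≤ M * K := Nat.mul_le_mul_left _ hlt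
  rw [Nat.mul_add] at h3
  omega

theorem chain_pow {α : Type} {R : α → α → Prop} (c : α) (t : List α)
    (h : (c :: t ++ [c]).IsChain R) (n : ℕ) :
    ((List.replicate n (c :: t)).flatten ++ [c]).IsChain R := by
  induction n with
  | zero => simp
  | succ n ih =>
    obtain ⟨s, hs⟩ : ∃ s, (List.replicate n (c :: t)).flatten ++ [c] = c :: s := by
      cases n <;> simp [List.replicate_succ]
    rw [List.replicate_succ, List.flatten_cons, List.append_assoc, hs]
    rw [hs] at ih
    exact List.isChain_split.2 ⟨h, ih⟩

theorem cyclen_mk_ge (c : Ltr) (t : List Ltr) (h : (c :: t ++ [c]).IsChain okp) :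
    (c :: t).length ≤ cyclen (FreeGroup.mk (c :: t)) := by
  apply cyclen_lower _ _ 0
  intro n
  rw [FreeGroup.pow_mk, len_mk_red _ (chain_pow c t h n).left_of_append]
  simp

abbrev la : Ltr := (0, true)
abbrev lb : Ltr := (1, true)

def Good (n : ℕ) (x : F) : Prop :=
  ∃ P Q : List Ltr, (∀ l ∈ P, l.2 = true) ∧ n ≤ P.countP (fun l => l.1 = 1) ∧
    (Q ++ [la]).IsChain okp ∧ (Q ++ [la]).head? = some la ∧
    IsConj x (FreeGroup.mk (la :: P ++ Q))

theorem chain_pos (P : List Ltr) (h : ∀ l ∈ P, l.2 = true) : P.IsChain okp := by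
  induction P with
  | nil => simp
  | cons x t ih =>
    cases t with
    | nil => simp
    | cons y t =>
      rw [List.isChain_cons_cons]
      refine ⟨fun _ => ?_, ih (fun l hl => h l (by simp [hl]))⟩
      rw [h x (by simp), h y (by simp)]

theorem exists_cons {Q : List Ltr} {w : Ltr} (h : (Q ++ [w]).head? = some w) :
    ∃ s, Q ++ [w] = w :: s := by
  cases hQ : Q ++ [w] with
  | nil => simp at hQ
  | cons a t => rw [hQ] at h; simp at h; exact ⟨t, by rw [h]⟩

theorem Good.cyclen_ge {n : ℕ} {x : F} (h : Good n x) : n ≤ cyclen x := by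
  obtain ⟨P, Q, hP, hn, hQ, hh, hc⟩ := h
  rw [cyclen_conj hc]
  have := cyclen_mk_ge la (P ++ Q) (by
    obtain ⟨s, hs⟩ := exists_cons hh
    have : la :: (P ++ Q) ++ [la] = (la :: P) ++ la :: s := by simp [← hs]
    rw [this]
    refine List.isChain_split.2 ⟨chain_pos _ ?_, hs ▸ hQ⟩
    intro l hl
    simp only [List.cons_append, List.mem_cons, List.mem_append, List.not_mem_nil, or_false] at hl
    rcases hl with rfl | hl | rfl
    · rfl
    · exact hP l hl
    · rfl)
  have h2 := List.countP_le_length (p := fun l : Ltr => decide (l.1 = 1)) (l := P)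
  simp only [List.length_cons, List.length_append] at this
  simp only [List.cons_append]
  omega

theorem mk_cons (x : Ltr) (l : List Ltr) : (FreeGroup.mk (x :: l) : F) = FreeGroup.mk [x] * FreeGroup.mk l := by
  rw [FreeGroup.mul_mk]; rfl

def fT (l : Ltr) : List Ltr := if l.1 = 0 then [l] else [la, l]
def fS (l : Ltr) : List Ltr := if l.1 = 0 then [l, lb] else [l]

theorem fT_spec (P : List Ltr) (h : ∀ l ∈ P, l.2 = true) :
    FreeGroup.mk [la] * tsub 0 (FreeGroup.mk P) = FreeGroup.mk (P.flatMap fT) * FreeGroup.mk [la] ∧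
    (P.flatMap fT).countP (fun l => l.1 = 1) = P.countP (fun l => l.1 = 1) ∧
    (∀ l ∈ P.flatMap fT, l.2 = true) := by
  induction P with
  | nil => simp [← FreeGroup.one_eq_mk]
  | cons x t ih =>
    obtain ⟨h1, h2, h3⟩ := ih (fun l hl => h l (by simp [hl]))
    obtain ⟨k, b⟩ := x
    have hb : b = true := h (k, b) (by simp)
    subst hb
    rw [List.flatMap_cons, mk_cons (k, true) t, map_mul, ← FreeGroup.mul_mk, mul_assoc, ← h1]
    fin_cases k
    · refine ⟨?_, ?_, ?_⟩
      · simp [tsub, fT, FreeGroup.of]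
      · simp [fT, h2]
      · intro l hl
        simp only [fT, List.mem_append] at hl
        rcases hl with hl | hl
        · simp at hl; simp [hl]
        · exact h3 l hl
    · refine ⟨?_, ?_, ?_⟩
      · have e : tsub 0 (FreeGroup.mk [lb]) = FreeGroup.mk [lb, la] := by simp [tsub, FreeGroup.of]
        change FreeGroup.mk [la] * (tsub 0 (FreeGroup.mk [lb]) * tsub 0 (FreeGroup.mk t)) =
          FreeGroup.mk [la, lb] * (FreeGroup.mk [la] * tsub 0 (FreeGroup.mk t))
        rw [e, ← mul_assoc, ← mul_assoc, FreeGroup.mul_mk, FreeGroup.mul_mk]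
        rfl
      · simp [fT, h2]
      · intro l hl
        simp only [fT, List.mem_append] at hl
        rcases hl with hl | hl
        · simp at hl; rcases hl with hl | hl <;> simp [hl]
        · exact h3 l hl

theorem fS_spec (P : List Ltr) (h : ∀ l ∈ P, l.2 = true) :
    tsub 1 (FreeGroup.mk P) = FreeGroup.mk (P.flatMap fS) ∧
    P.countP (fun l => l.1 = 1) ≤ (P.flatMap fS).countP (fun l => l.1 = 1) ∧
    (∀ l ∈ P.flatMap fS, l.2 = true) := by
  induction P with
  | nil => simp [← FreeGroup.one_eq_mk]
  | cons x t ih =>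
    obtain ⟨h1, h2, h3⟩ := ih (fun l hl => h l (by simp [hl]))
    obtain ⟨k, b⟩ := x
    have hb : b = true := h (k, b) (by simp)
    subst hb
    rw [List.flatMap_cons, mk_cons (k, true) t, map_mul, ← FreeGroup.mul_mk, ← h1]
    fin_cases k
    · refine ⟨?_, ?_, ?_⟩
      · simp [tsub, fS, FreeGroup.of]
      · simp [fS]; omega
      · intro l hl
        simp only [fS, List.mem_append] at hl
        rcases hl with hl | hl
        · simp at hl; rcases hl with hl | hl <;> simp [hl]
        · exact h3 l hl
    · refine ⟨?_, ?_, ?_⟩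
      · simp [tsub, fS, FreeGroup.of]
      · simp [fS]; omega
      · intro l hl
        simp only [fS, List.mem_append] at hl
        rcases hl with hl | hl
        · simp at hl; simp [hl]
        · exact h3 l hl

theorem isConj_map (f : F →* F) {x y : F} (h : IsConj x y) : IsConj (f x) (f y) := f.map_isConj h

theorem Good.tau {n : ℕ} {x : F} (hn1 : 1 ≤ n) (h : Good n x) : Good n (tsub 0 x) := by
  obtain ⟨P, Q, hP, hn, hQ, hh, hc⟩ := h
  obtain ⟨s, hs⟩ := exists_cons hh
  obtain ⟨h1, h2, h3⟩ := fT_spec P hP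
  obtain ⟨P', hP'⟩ : ∃ P', P.flatMap fT = la :: P' := by
    cases P with
    | nil => simp at hn; omega
    | cons y t =>
      obtain ⟨k, b⟩ := y
      have hb : b = true := hP (k, b) (by simp)
      subst hb
      fin_cases k <;> simp [fT]
  rw [hs] at hQ
  obtain ⟨g1, g2, g3, -⟩ := HH_main 0 s la hQ
  obtain ⟨Z, hZ⟩ := HH_last 0 la s la (by rw [← hs]; simp)
  have hrt : rt 0 la = [la] := by decide
  rw [hrt] at hZ g1
  refine ⟨P', la :: Z, ?_, ?_, ?_, by simp, ?_⟩
  · intro l hl; exact h3 l (by rw [hP']; simp [hl])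
  · rw [hP'] at h2
    simp at h2
    simpa [h2] using hn
  · rw [List.cons_append, ← hZ]
    rw [List.isChain_cons]
    refine ⟨?_, g2⟩
    intro w hw
    have := g3 w hw
    revert this
    generalize w = w
    revert w
    decide
  · have := isConj_map (tsub 0) hc
    convert this using 1
    rw [List.cons_append, List.cons_append, mk_cons la (P ++ Q), ← FreeGroup.mul_mk, map_mul, map_mul, ← List.cons_append, ← hP',
      ← FreeGroup.mul_mk]
    have e1 : tsub 0 (FreeGroup.mk [la]) = FreeGroup.mk [la] := by simp [tsub, FreeGroup.of]
    have e2 : FreeGroup.mk [la] * tsub 0 (FreeGroup.mk s) = tsub 0 (FreeGroup.mk Q) * FreeGroup.mk [la] := by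
      have := congrArg (fun l => tsub 0 (FreeGroup.mk l)) hs
      simp only [mk_cons la s, ← FreeGroup.mul_mk, map_mul, e1] at this
      exact this.symm
    have e3 : (FreeGroup.mk Z : F) = tsub 0 (FreeGroup.mk Q) := by
      rw [hZ, ← FreeGroup.mul_mk, e2] at g1
      exact mul_right_cancel g1
    rw [mk_cons la Z, e3, e1, ← mul_assoc, ← h1, mul_assoc]

theorem Good.sigma {n : ℕ} {x : F} (h : Good n x) : Good (n + 1) (tsub 1 x) := by
  obtain ⟨P, Q, hP, hn, hQ, hh, hc⟩ := h
  obtain ⟨s, hs⟩ := exists_cons hh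
  obtain ⟨h1, h2, h3⟩ := fS_spec P hP
  rw [hs] at hQ
  obtain ⟨g1, g2, g3, -⟩ := HH_main 1 s la hQ
  obtain ⟨Z, hZ⟩ := HH_last 1 la s la (by rw [← hs]; simp)
  have hrt : rt 1 la = [la, lb] := by decide
  rw [hrt] at hZ g1
  refine ⟨lb :: P.flatMap fS, Z, ?_, ?_, ?_, ?_, ?_⟩
  · intro l hl
    rcases List.mem_cons.1 hl with rfl | hl
    · rfl
    · exact h3 l hl
  · simp only [List.countP_cons]
    simp
    omega
  · rw [hZ, show Z ++ [la, lb] = (Z ++ [la]) ++ [lb] by simp] at g2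
    exact g2.left_of_append
  · rw [hZ] at g3
    cases Z with
    | nil => simp
    | cons z Z =>
      have := (g3 z (by simp)).2.1 rfl (by decide)
      simp [this]
  · have := isConj_map (tsub 1) hc
    convert this using 1
    have e1 : tsub 1 (FreeGroup.mk [la]) = FreeGroup.mk [la, lb] := by simp [tsub, FreeGroup.of]
    have e2 : FreeGroup.mk [la, lb] * tsub 1 (FreeGroup.mk s) = tsub 1 (FreeGroup.mk Q) * FreeGroup.mk [la, lb] := by
      have := congrArg (fun l => tsub 1 (FreeGroup.mk l)) hs
      simp only [mk_cons la s, ← FreeGroup.mul_mk, map_mul, e1] at this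
      exact this.symm
    have e3 : (FreeGroup.mk Z : F) = tsub 1 (FreeGroup.mk Q) := by
      rw [hZ, ← FreeGroup.mul_mk, e2] at g1
      exact mul_right_cancel g1
    rw [show la :: P ++ Q = la :: (P ++ Q) from rfl, mk_cons la (P ++ Q), ← FreeGroup.mul_mk (L₁ := P), map_mul, map_mul, h1, e1, ← e3, FreeGroup.mul_mk,
      FreeGroup.mul_mk]
    simp

def th (s t : Bool) : F →* F :=
  FreeGroup.lift ![if s then ga else ga⁻¹, if t then gb else gb⁻¹]

theorem len_th (s t : Bool) (x : F) : len (th s t x) ≤ len x := by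
  have h : ∀ L : List Ltr, len (th s t (FreeGroup.mk L)) ≤ L.length := by
    intro L
    induction L with
    | nil => rw [← FreeGroup.one_eq_mk, map_one]; simp [len]
    | cons y l ih =>
      rw [mk_cons, map_mul]
      have h1 := len_mul_le (th s t (FreeGroup.mk [y])) (th s t (FreeGroup.mk l))
      have h2 : len (th s t (FreeGroup.mk [y])) ≤ 1 := by
        obtain ⟨k, b⟩ := y
        have ha : len ga = 1 := FreeGroup.norm_of 0
        have hb : len gb = 1 := FreeGroup.norm_of 1
        fin_cases k <;> cases b <;> cases s <;> cases t <;> simp [th, len_inv, ha, hb]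
      simp only [List.length_cons]
      omega
  have := h x.toWord
  rwa [FreeGroup.mk_toWord] at this

theorem cyclen_th (s t : Bool) (x : F) : cyclen (th s t x) ≤ cyclen x := by
  obtain ⟨g, hg⟩ := cyclen_spec x
  rw [← hg]
  refine le_trans ?_ (len_th s t _)
  rw [map_mul, map_mul, map_inv]
  exact cyclen_le _ _

theorem th_conj (i : Fin 2) (s : Bool) : ∃ g : F, ∀ x, g * th s (!s) x * g⁻¹ = tsub i (th s (!s) (tsub i x)) := by
  have key : ∀ g : F, ((MulAut.conj g).toMonoidHom.comp (th s (!s)) = (tsub i).comp ((th s (!s)).comp (tsub i))) →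
      ∀ x, g * th s (!s) x * g⁻¹ = tsub i (th s (!s) (tsub i x)) := by
    intro g h x
    exact DFunLike.congr_fun h x
  fin_cases i <;> cases s
  · refine ⟨1, key _ ?_⟩
    ext j; fin_cases j <;> simp [th, tsub, ga, gb]
  · refine ⟨ga⁻¹, key _ ?_⟩
    ext j; fin_cases j <;> simp [th, tsub, ga, gb]
  · refine ⟨gb⁻¹, key _ ?_⟩
    ext j; fin_cases j <;> simp [th, tsub, ga, gb]
  · refine ⟨1, key _ ?_⟩
    ext j; fin_cases j <;> simp [th, tsub, ga, gb]

theorem Good.conj {n : ℕ} {x y : F} (h : Good n x) (hc : IsConj y x) : Good n y := by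
  obtain ⟨P, Q, hP, hn, hQ, hh, hc'⟩ := h
  exact ⟨P, Q, hP, hn, hQ, hh, hc.trans hc'⟩

theorem Good.tau_back {n : ℕ} (s : Bool) (hn : 1 ≤ n) (m : ℕ) : ∀ {y : F}, Good n (th s (!s) ((τ ^ m) y)) →
    Good n (th s (!s) y) := by
  induction m with
  | zero => intro y h; simpa using h
  | succ m ih =>
    intro y h
    rw [pow_succ, MulAut.mul_apply] at h
    have h2 := ih h
    rw [tau_eq] at h2
    obtain ⟨g, hg⟩ := th_conj 0 s
    exact (h2.tau hn).conj (isConj_iff.2 ⟨g, hg y⟩)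

theorem Good.sigma_back (s : Bool) (m : ℕ) : ∀ {n : ℕ} {y : F}, Good n (th s (!s) ((σ ^ m) y)) →
    Good (n + m) (th s (!s) y) := by
  induction m with
  | zero => intro n y h; simpa using h
  | succ m ih =>
    intro n y h
    rw [pow_succ, MulAut.mul_apply] at h
    have h2 := ih h
    rw [sigma_eq] at h2
    obtain ⟨g, hg⟩ := th_conj 1 s
    exact (h2.sigma).conj (isConj_iff.2 ⟨g, hg y⟩)

theorem Good.chain_back (s : Bool) (c : List (ℕ × ℕ)) (u : F) : ∀ {n : ℕ}, 1 ≤ n → Good n (th s (!s) (chainC1 c u)) →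
    Good (n + sigmaCount c) (th s (!s) u) := by
  induction c with
  | nil => intro n _ h; simpa [chainC1, sigmaCount] using h
  | cons p c ih =>
    intro n hn h
    have e : chainC1 (p :: c) u = (τ ^ p.2) ((σ ^ p.1) (chainC1 c u)) := by
      simp [chainC1, MulAut.mul_apply]
    rw [e] at h
    have h2 := (h.tau_back s hn).sigma_back s
    have h3 := ih (by omega) h2
    have e2 : sigmaCount (p :: c) = p.1 + sigmaCount c := by simp [sigmaCount]
    rw [e2, ← add_assoc]
    exact h3

theorem noBad (s : Bool) (c : List (ℕ × ℕ)) (u : F) (h : cyclen u + 1 ≤ sigmaCount c) :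
    ¬ Good 1 (th s (!s) (chainC1 c u)) := by
  intro hg
  have h1 := (hg.chain_back s c u le_rfl).cyclen_ge
  have h2 := cyclen_th s (!s) u
  omega


abbrev Gap : Type := Bool × ℤ

def gw (x : Gap) : List Ltr := (0, x.1) :: List.replicate x.2.natAbs (1, decide (0 ≤ x.2))

def gp (x : Gap) : F := (if x.1 then ga else ga⁻¹) * gb ^ x.2

def prodg (g : List Gap) : F := (g.map gp).prod

theorem prodg_cons (x : Gap) (g : List Gap) : prodg (x :: g) = gp x * prodg g := by simp [prodg]
theorem prodg_append (g h : List Gap) : prodg (g ++ h) = prodg g * prodg h := by simp [prodg]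
theorem prodg_nil : prodg [] = 1 := rfl

theorem mk_replicate (m : ℕ) (l : Ltr) : (FreeGroup.mk (List.replicate m l) : F) = (FreeGroup.mk [l]) ^ m := by
  induction m with
  | zero => simp [← FreeGroup.one_eq_mk]
  | succ m ih => rw [List.replicate_succ, mk_cons, ih, pow_succ']

theorem mk_gw (x : Gap) : (FreeGroup.mk (gw x) : F) = gp x := by
  obtain ⟨e, k⟩ := x
  have h1 : (FreeGroup.mk [((0 : Fin 2), e)] : F) = if e then ga else ga⁻¹ := by
    cases e
    · simp [ga, FreeGroup.of, FreeGroup.invRev]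
    · rfl
  unfold gw gp
  rw [mk_cons, h1, mk_replicate]
  congr 1
  rcases le_or_gt 0 k with hk | hk
  · obtain ⟨m, rfl⟩ := Int.eq_ofNat_of_zero_le hk
    have e : (FreeGroup.mk [((1 : Fin 2), true)] : F) = gb := rfl
    simp only [hk, decide_true, e]
    simp
  · obtain ⟨m, hm⟩ := Int.eq_ofNat_of_zero_le (show 0 ≤ -k by omega)
    obtain rfl : k = -m := by omega
    have : ¬ (0 ≤ -(m : ℤ)) := by omega
    have e : (FreeGroup.mk [((1 : Fin 2), false)] : F) = gb⁻¹ := by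
      simp [gb, FreeGroup.of, FreeGroup.invRev]
    simp only [this, decide_false, e]
    simp

theorem mk_W (g : List Gap) : (FreeGroup.mk (g.flatMap gw) : F) = prodg g := by
  induction g with
  | nil => simp [prodg, ← FreeGroup.one_eq_mk]
  | cons x t ih => rw [List.flatMap_cons, ← FreeGroup.mul_mk, ih, mk_gw, prodg_cons]

theorem exists_rep (x : F) : ∃ (k : ℤ) (g : List Gap), x = gb ^ k * prodg g := by
  have h : ∀ L : List Ltr, ∃ (k : ℤ) (g : List Gap), (FreeGroup.mk L : F) = gb ^ k * prodg g := by
    intro L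
    induction L with
    | nil => exact ⟨0, [], by simp [prodg, ← FreeGroup.one_eq_mk]⟩
    | cons y l ih =>
      obtain ⟨k, g, hg⟩ := ih
      obtain ⟨i, b⟩ := y
      rw [mk_cons, hg]
      fin_cases i
      · refine ⟨0, (b, k) :: g, ?_⟩
        rw [prodg_cons, zpow_zero, one_mul, gp, ← mul_assoc]
        congr 2
        cases b <;> simp [ga, FreeGroup.of, FreeGroup.invRev]
      · refine ⟨(if b then 1 else -1) + k, g, ?_⟩
        rw [zpow_add, ← mul_assoc]
        congr 2
        cases b <;> simp [gb, FreeGroup.of, FreeGroup.invRev]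
  obtain ⟨k, g, hg⟩ := h x.toWord
  exact ⟨k, g, by rw [← hg, FreeGroup.mk_toWord]⟩

def MinRep (v : F) (g : List Gap) : Prop :=
  IsConj v (prodg g) ∧ ∀ (k : ℤ) (g' : List Gap), IsConj v (gb ^ k * prodg g') → g.length ≤ g'.length

theorem isConj_mulcomm (x y : F) : IsConj (x * y) (y * x) :=
  isConj_iff.2 ⟨y, by group⟩

theorem minrep_exists (v : F) : (∃ k : ℤ, v = gb ^ k ∨ IsConj v (gb ^ k)) ∨ ∃ c t, MinRep v (c :: t) := by
  classical
  have hex : ∃ n, ∃ (k : ℤ) (g : List Gap), g.length = n ∧ IsConj v (gb ^ k * prodg g) := by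
    obtain ⟨k, g, hg⟩ := exists_rep v
    exact ⟨_, k, g, rfl, by rw [← hg]⟩
  obtain ⟨k, g, hn, hg⟩ := Nat.find_spec hex
  have hmin : ∀ (k : ℤ) (g' : List Gap), IsConj v (gb ^ k * prodg g') → g.length ≤ g'.length := by
    intro k' g' h
    rw [hn]
    exact Nat.find_min' hex ⟨k', g', rfl, h⟩
  rcases List.eq_nil_or_concat g with rfl | ⟨l, x, rfl⟩
  · left; exact ⟨k, Or.inr (by simpa [prodg] using hg)⟩
  · right
    have hne : l ++ [(x.1, x.2 + k)] ≠ [] := by simp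
    obtain ⟨c, t, hct⟩ := List.exists_cons_of_ne_nil hne
    refine ⟨c, t, ?_⟩
    rw [← hct]
    refine ⟨?_, ?_⟩
    · refine hg.trans ((isConj_mulcomm _ _).trans ?_)
      have : prodg (l.concat x) * gb ^ k = prodg (l ++ [(x.1, x.2 + k)]) := by
        simp [prodg, gp, zpow_add, mul_assoc]
      rw [this]
    · intro k' g' h
      simpa using hmin k' g' h

theorem MinRep.rotate {v : F} {A B : List Gap} (h : MinRep v (A ++ B)) : MinRep v (B ++ A) := by
  refine ⟨h.1.trans ?_, ?_⟩
  · rw [prodg_append, prodg_append]; exact isConj_mulcomm _ _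
  · intro k g' hg
    have := h.2 k g' hg
    simp at this ⊢
    omega

theorem MinRep.opp {v : F} {l : List Gap} {x z : Gap} (h : MinRep v (l ++ [x]))
    (hz : (l ++ [x]).head? = some z) (hs : x.1 ≠ z.1) : x.2 ≠ 0 := by
  intro hx
  cases l with
  | nil => simp at hz; exact hs (by rw [hz])
  | cons y l =>
    simp at hz; subst hz
    have h1 := h.2 y.2 l (by
      refine h.1.trans ?_
      rw [prodg_append]
      refine (isConj_mulcomm _ _).trans ?_
      have : prodg [x] * prodg (y :: l) = gb ^ y.2 * prodg l := by
        rw [prodg_cons, prodg_cons, prodg_nil]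
        obtain ⟨e, k⟩ := x
        obtain ⟨f, m⟩ := y
        simp only at hx hs
        subst hx
        cases e <;> cases f <;> simp_all [gp, mul_assoc]
      rw [this])
    simp at h1

theorem chain_cyc {v : F} {R : Gap → Gap → Prop}
    (hR : ∀ l x z, MinRep v (l ++ [x]) → (l ++ [x]).head? = some z → R x z)
    {c : Gap} {t : List Gap} (h : MinRep v (c :: t)) : (c :: t ++ [c]).IsChain R := by
  rw [List.isChain_iff_forall_rel_of_append_cons_cons]
  intro a b l₁ l₂ hl
  rcases List.eq_nil_or_concat l₂ with rfl | ⟨l, d, rfl⟩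
  · have : (c :: t) ++ [c] = (l₁ ++ [a]) ++ [b] := by simpa using hl
    obtain ⟨e1, e2⟩ := List.append_inj' this rfl
    simp at e2; subst e2
    rw [e1] at h
    exact hR l₁ a c h (by rw [← e1]; rfl)
  · have : (c :: t) ++ [c] = (l₁ ++ a :: b :: l) ++ [d] := by simpa using hl
    obtain ⟨e1, e2⟩ := List.append_inj' this rfl
    rw [e1, show l₁ ++ a :: b :: l = (l₁ ++ [a]) ++ (b :: l) by simp] at h
    have h2 := h.rotate
    rw [← List.append_assoc] at h2
    exact hR _ a b h2 (by simp)

def Rg (x z : Gap) : Prop := x.1 ≠ z.1 → x.2 ≠ 0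

theorem rep_chain (s e c : Bool) (m : ℕ) (h : s ≠ e → m ≠ 0) :
    (((0 : Fin 2), s) :: List.replicate m ((1 : Fin 2), c) ++ [((0 : Fin 2), e)]).IsChain okp := by
  have h1 : ∀ m, (((1 : Fin 2), c) :: List.replicate m ((1 : Fin 2), c) ++ [((0 : Fin 2), e)]).IsChain okp := by
    intro m
    induction m with
    | zero => simp [okp]
    | succ m ih =>
      rw [List.replicate_succ, List.cons_append, List.cons_append, List.isChain_cons_cons]
      exact ⟨fun _ => rfl, ih⟩
  cases m with
  | zero =>
    have : s = e := by by_contra hh; exact h hh rfl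
    simp [okp, this]
  | succ m =>
    rw [List.replicate_succ, List.cons_append, List.cons_append, List.isChain_cons_cons]
    exact ⟨by simp [okp], h1 m⟩

def hd : List Gap → Bool → Bool
  | [], z => z
  | y :: _, _ => y.1

theorem W_head (t : List Gap) (w : Bool) : ∃ r, t.flatMap gw ++ [((0 : Fin 2), w)] = (0, hd t w) :: r := by
  cases t with
  | nil => exact ⟨[], rfl⟩
  | cons y t => exact ⟨_, by rw [List.flatMap_cons, gw]; simp [hd]; rfl⟩

theorem hd_rel {R : Gap → Gap → Prop} {x w : Gap} {t : List Gap} (hR : ∀ x y z, y.1 = z.1 → R x y → R x z)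
    (h : (x :: t ++ [w]).IsChain R) : R x (hd t w.1, 0) ∧ (t ++ [w]).IsChain R := by
  cases t with
  | nil => simp at h; exact ⟨hR x w _ rfl h, by simp⟩
  | cons y t =>
    rw [List.cons_append, List.cons_append, List.isChain_cons_cons] at h
    exact ⟨hR x y _ rfl h.1, h.2⟩

theorem gw_chain (h : List Gap) (w : Gap) (hc : (h ++ [w]).IsChain Rg) :
    (h.flatMap gw ++ [((0 : Fin 2), w.1)]).IsChain okp := by
  induction h with
  | nil => simp
  | cons x t ih =>
    obtain ⟨h1, h2⟩ := hd_rel (by intro x y z hyz h; simpa [Rg, hyz] using h) hc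
    obtain ⟨r, hr⟩ := W_head t w.1
    have h3 := ih h2
    rw [hr] at h3
    rw [List.flatMap_cons, List.append_assoc, hr]
    refine List.isChain_split.2 ⟨?_, h3⟩
    apply rep_chain
    intro hne
    have := h1 hne
    omega

def thg (s : Bool) (x : Gap) : Gap := (if s then x.1 else !x.1, if s then -x.2 else x.2)

theorem th_prodg (s : Bool) (g : List Gap) : th s (!s) (prodg g) = prodg (g.map (thg s)) := by
  induction g with
  | nil => simp [prodg]
  | cons x t ih =>
    rw [List.map_cons, prodg_cons, prodg_cons, map_mul, ih]
    congr 1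
    obtain ⟨e, k⟩ := x
    cases s <;> cases e <;> simp [gp, thg, th, ga, gb]

theorem MinRep.nonbad {v : F} {s : Bool} (hv : ¬ Good 1 (th s (!s) v)) {l : List Gap} {x z : Gap}
    (h : MinRep v (l ++ [x])) (hz : (l ++ [x]).head? = some z) (hx : x.1 = s) (hzs : z.1 = s) :
    (thg s x).2 ≤ 0 := by
  by_contra hk
  push Not at hk
  apply hv
  have hch : (l ++ [x]).IsChain Rg := by
    obtain ⟨c, t, hct⟩ := List.exists_cons_of_ne_nil (show l ++ [x] ≠ [] by simp)
    rw [hct] at h ⊢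
    exact (chain_cyc (R := Rg) (fun l x z h hz hs => h.opp hz hs) h).left_of_append
  have hch' : (l.map (thg s) ++ [thg s x]).IsChain Rg := by
    rw [show l.map (thg s) ++ [thg s x] = (l ++ [x]).map (thg s) by simp, List.isChain_map]
    refine hch.imp ?_
    rintro ⟨e, k⟩ ⟨f, m⟩ hh
    cases s <;> simpa [Rg, thg] using hh
  have hs1 : (thg s x).1 = true := by cases s <;> simp [thg, hx]
  have hQ := gw_chain _ _ hch'
  rw [hs1] at hQ
  refine ⟨List.replicate (thg s x).2.natAbs lb, (l.map (thg s)).flatMap gw, ?_, ?_, hQ, ?_, ?_⟩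
  · intro y hy; rw [List.eq_of_mem_replicate hy]
  · rw [List.countP_replicate]; simp; omega
  · obtain ⟨r, hr⟩ := W_head (l.map (thg s)) true
    rw [hr]
    cases l with
    | nil => simp [hd]
    | cons y l =>
      simp at hz; subst hz
      cases s <;> simp [hd, thg, hzs]
  · have h1 := isConj_map (th s (!s)) h.1
    rw [th_prodg, List.map_append, prodg_append] at h1
    refine h1.trans ((isConj_mulcomm _ _).trans ?_)
    have : la :: List.replicate (thg s x).2.natAbs lb = gw (thg s x) := by
      rw [gw, hs1]; simp [hk.le]
    rw [this, ← FreeGroup.mul_mk, mk_gw, mk_W, List.map_cons, List.map_nil, prodg_cons, prodg_nil, mul_one]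

def al (e : Bool) : ℤ := if e then 1 else 0
def be (e : Bool) : ℤ := if e then 0 else -1

def adj : List Gap → Bool → List Gap
  | [], _ => []
  | x :: t, z => (x.1, x.2 + al x.1 + be (hd t z)) :: adj t z

theorem tsub_adj (g : List Gap) (z : Bool) :
    tsub 1 (prodg g) * gb ^ be z = gb ^ be (hd g z) * prodg (adj g z) := by
  induction g with
  | nil => simp [prodg, adj, hd]
  | cons x t ih =>
    rw [prodg_cons, map_mul, mul_assoc, ih, adj, prodg_cons, ← mul_assoc, ← mul_assoc]
    congr 1
    obtain ⟨e, k⟩ := x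
    have hb : tsub 1 gb = gb := by simp [tsub, gb]
    have ha : tsub 1 ga = ga * gb := by simp [tsub, ga, gb]
    have h0 : hd ((e, k) :: t) z = e := rfl
    rw [h0]
    generalize be (hd t z) = q
    cases e
    · simp [gp, al, be, ha, hb, mul_assoc, zpow_add]
    · simp only [gp, al, be, if_true, map_mul, map_zpow, ha, hb]
      rw [show k + 1 + q = 1 + k + q by ring]
      simp [mul_assoc, zpow_add]

theorem hd_adj (g : List Gap) (z : Bool) : hd (adj g z) z = hd g z := by
  cases g <;> simp [adj, hd]

def same : List Gap → Bool → ℕ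
  | [], _ => 0
  | x :: t, z => (if x.1 = hd t z then 1 else 0) + same t z

theorem same_adj (g : List Gap) (z : Bool) : same (adj g z) z = same g z := by
  induction g with
  | nil => rfl
  | cons x t ih => simp [adj, same, ih, hd_adj]

theorem adj_of_same (g : List Gap) (z : Bool) (h : same g z = 0) : adj g z = g := by
  induction g with
  | nil => rfl
  | cons x t ih =>
    simp only [same, Nat.add_eq_zero_iff] at h
    rw [adj, ih h.2]
    obtain ⟨e, k⟩ := x
    have h1 := h.1
    cases e <;> cases hh : hd t z <;> simp_all [al, be]

def Rf (x z : Gap) : Prop :=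
  (x.1 ≠ z.1 → x.2 ≠ 0) ∧ (x.1 = true → z.1 = true → 0 ≤ x.2) ∧ (x.1 = false → z.1 = false → x.2 ≤ 0)

def Rs (x z : Gap) : Prop :=
  (x.1 ≠ z.1 → x.2 ≠ 0) ∧ (x.1 = true → z.1 = true → 1 ≤ x.2) ∧ (x.1 = false → z.1 = false → x.2 ≤ -1)

theorem adj_chain (g : List Gap) (w w' : Gap) (hw : w.1 = w'.1) (h : (g ++ [w]).IsChain Rf) :
    (adj g w.1 ++ [w']).IsChain Rs := by
  induction g with
  | nil => simp [adj]
  | cons x t ih =>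
    obtain ⟨h1, h2⟩ := hd_rel (by intro x y z hyz h; simpa [Rf, hyz] using h) h
    have h3 := ih h2
    rw [adj, List.cons_append, List.isChain_cons]
    refine ⟨?_, h3⟩
    intro y hy
    have hy1 : y.1 = hd t w.1 := by
      cases t with
      | nil => simp [adj] at hy; simp [hd, ← hy, hw]
      | cons q t => simp [adj] at hy; simp [hd, ← hy]
    obtain ⟨e, k⟩ := x
    unfold Rf at h1
    unfold Rs
    rw [hy1]
    simp only at h1 ⊢
    cases e <;> cases hh : hd t w.1 <;> simp_all [al, be] <;> omega

theorem tn_split (A : List Ltr) (x : Ltr) (B : List Ltr) : tn (A ++ x :: B) = tn (A ++ [x]) + tn (x :: B) := by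
  induction A with
  | nil => simp [tn]
  | cons a A ih =>
    cases A with
    | nil => simp [tn]
    | cons b A =>
      simp only [List.cons_append, tn] at ih ⊢
      omega

theorem tn_append_le (A : List Ltr) (x : Ltr) : tn A ≤ tn (A ++ [x]) := by
  induction A with
  | nil => simp [tn]
  | cons a A ih =>
    cases A with
    | nil => simp [tn]
    | cons b A =>
      simp only [List.cons_append, tn] at ih ⊢
      omega

theorem tn_gw (s e c : Bool) (m : ℕ) :
    tn (((0 : Fin 2), s) :: List.replicate (m + 1) ((1 : Fin 2), c) ++ [((0 : Fin 2), e)]) =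
      (if s = true ∧ c = false then 1 else 0) + (if c = true ∧ e = false then 1 else 0) := by
  have h1 : ∀ m, tn (((1 : Fin 2), c) :: List.replicate m ((1 : Fin 2), c) ++ [((0 : Fin 2), e)]) =
      (if c = true ∧ e = false then 1 else 0) := by
    intro m
    induction m with
    | zero => simp [tn]
    | succ m ih =>
      rw [List.replicate_succ, List.cons_append, List.cons_append, tn, ← List.cons_append, ih]
      simp
  rw [List.replicate_succ, List.cons_append, List.cons_append, tn, ← List.cons_append, h1]

def cnt (L : List Ltr) : ℕ := L.countP (fun l => l.1 ≠ 0)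

theorem phi (h : List Gap) (w : Gap) (hc : (h ++ [w]).IsChain Rs) :
    2 * tn (h.flatMap gw ++ [((0 : Fin 2), w.1)]) + same h w.1 + (if w.1 then 1 else 0) ≤
      cnt (h.flatMap gw) + (if hd h w.1 then 1 else 0) := by
  induction h with
  | nil => exact le_of_eq (by simp [tn, same, cnt]; rfl)
  | cons x t ih =>
    obtain ⟨h1, h2⟩ := hd_rel (by intro x y z hyz h; simpa [Rs, hyz] using h) hc
    have h3 := ih h2
    obtain ⟨r, hr⟩ := W_head t w.1
    rw [hr] at h3
    rw [List.flatMap_cons, List.append_assoc, hr, tn_split]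
    obtain ⟨s, k⟩ := x
    have hk : k ≠ 0 := by
      unfold Rs at h1
      cases s <;> cases hh : hd t w.1 <;> simp_all <;> omega
    obtain ⟨m, hm⟩ : ∃ m, k.natAbs = m + 1 := ⟨k.natAbs - 1, by omega⟩
    have e1 : tn (gw (s, k) ++ [((0 : Fin 2), hd t w.1)]) =
      (if s = true ∧ decide (0 ≤ k) = false then 1 else 0) + (if decide (0 ≤ k) = true ∧ hd t w.1 = false then 1 else 0) := by
      rw [gw, hm]; exact tn_gw _ _ _ _
    have e2 : cnt (gw (s, k) ++ t.flatMap gw) = m + 1 + cnt (t.flatMap gw) := by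
      simp [cnt, gw, hm, List.countP_replicate]
    rw [e1, e2]
    unfold Rs at h1
    have h4 : hd ((s, k) :: t) w.1 = s := rfl
    have h5 : same ((s, k) :: t) w.1 = (if s = hd t w.1 then 1 else 0) + same t w.1 := rfl
    rw [h4, h5]
    simp only at h1
    clear e1 e2 h4 h5 hr h2 ih hc
    generalize hd t w.1 = q at *
    rcases le_or_gt 0 k with hk0 | hk0
    · have hd0 : decide (0 ≤ k) = true := by simpa using hk0
      rw [hd0]
      cases s <;> cases q <;> simp_all <;> omega
    · have : ¬ (0 ≤ k) := by omega
      have hd0 : decide (0 ≤ k) = false := by simpa using hk0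
      rw [hd0]
      clear hd0
      cases s <;> cases q <;> simp_all <;> omega

theorem same_append (A B : List Gap) (z : Bool) : same (A ++ B) z = same A (hd B z) + same B z := by
  induction A with
  | nil => simp [same]
  | cons x t ih =>
    have : hd (t ++ B) z = hd t (hd B z) := by cases t <;> rfl
    simp [same, ih, this, add_assoc]

theorem sum_cost (L : List Ltr) : (L.map (cost 0)).sum = L.length + cnt L := by
  induction L with
  | nil => rfl
  | cons x t ih =>
    simp only [List.map_cons, List.sum_cons, ih, List.length_cons, cnt, List.countP_cons, cost]
    by_cases h : x.1 = 0 <;> simp [h] <;> omega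

theorem len_tau_lower (L : List Ltr) (h : L.IsChain okp) :
    L.length + cnt L ≤ len (tsub 0 (FreeGroup.mk L)) + 2 * tn L + 4 := by
  cases L with
  | nil => simp [cnt]
  | cons x t =>
    obtain ⟨h1, h2, -, h4⟩ := HH_main 0 t x h
    have e : FreeGroup.mk (HH 0 x t) = (FreeGroup.mk (lf 0 x))⁻¹ * tsub 0 (FreeGroup.mk (x :: t)) := by
      rw [h1, mk_cons, map_mul, ← mk_lf_rt]; group
    have h5 := len_mk_red _ h2
    rw [e] at h5
    have h6 := len_mul_le (FreeGroup.mk (lf 0 x))⁻¹ (tsub 0 (FreeGroup.mk (x :: t)))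
    rw [len_inv] at h6
    have h7 := len_mk_le (lf 0 x)
    have h9 : (lf 0 x).length + (1 + cnt [x]) ≤ (rt 0 x).length + 4 := by
      have : ∀ x : Ltr, (lf 0 x).length + (1 + cnt [x]) ≤ (rt 0 x).length + 4 := by decide
      exact this x
    rw [sum_cost] at h4
    have h10 : cnt (x :: t) = cnt [x] + cnt t := by
      simp only [cnt, List.countP_cons, List.countP_nil]; omega
    rw [h10, List.length_cons]
    omega

theorem same_pow (h : List Gap) (z : Bool) (hz : hd h z = z) (n : ℕ) :
    same (List.replicate n h).flatten z = n * same h z ∧ hd (List.replicate n h).flatten z = z := by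
  induction n with
  | zero => simp [same, hd]
  | succ n ih =>
    rw [List.replicate_succ, List.flatten_cons, same_append, ih.2, ih.1]
    refine ⟨by ring, ?_⟩
    cases h with
    | nil => simpa using ih.2
    | cons x t => simpa [hd] using hz

theorem key_lower (c : Gap) (t : List Gap) (hc : (c :: t ++ [c]).IsChain Rs) :
    ((c :: t).flatMap gw).length + same (c :: t) c.1 ≤ cyclen (tsub 0 (prodg (c :: t))) := by
  apply cyclen_lower _ _ 4
  intro n
  have h1 := chain_pow c t hc n
  have h2 := phi _ _ h1
  obtain ⟨h3, h4⟩ := same_pow (c :: t) c.1 rfl n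
  rw [h3, h4] at h2
  have h5 : ((List.replicate n (c :: t)).flatten.flatMap gw).IsChain okp :=
    (gw_chain _ c (h1.imp (fun _ _ h => h.1))).left_of_append
  have h6 := len_tau_lower _ h5
  have h7 := tn_append_le ((List.replicate n (c :: t)).flatten.flatMap gw) (0, c.1)
  have h8 : prodg (List.replicate n (c :: t)).flatten = prodg (c :: t) ^ n := by
    clear h1 h2 h3 h4 h5 h6 h7
    induction n with
    | zero => simp [prodg]
    | succ n ih =>
      rw [List.replicate_succ, List.flatten_cons, prodg_append, ih, pow_succ']
  have h9 : ((List.replicate n (c :: t)).flatten.flatMap gw).length = n * ((c :: t).flatMap gw).length := by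
    clear h1 h2 h3 h4 h5 h6 h7 h8
    induction n with
    | zero => simp
    | succ n ih =>
      rw [List.replicate_succ, List.flatten_cons, List.flatMap_append, List.length_append, ih]; ring
  rw [mk_W, h8, map_pow, h9] at h6
  rw [Nat.mul_add]
  omega


theorem conj_adj (c : Gap) (t : List Gap) :
    IsConj (tsub 1 (prodg (c :: t))) (prodg (adj (c :: t) c.1)) := by
  have h := tsub_adj (c :: t) c.1
  have h0 : hd (c :: t) c.1 = c.1 := rfl
  rw [h0] at h
  refine isConj_iff.2 ⟨(gb ^ be c.1)⁻¹, ?_⟩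
  rw [inv_inv, mul_assoc, h, inv_mul_cancel_left]

theorem sigma_conj (c₁ : List (ℕ × ℕ)) (u : F)
    (hσ : cyclen u + 1 ≤ sigmaCount c₁)
    (h : cyclen (τ (σ (chainC1 c₁ u))) = cyclen (σ (chainC1 c₁ u))) :
    IsConj (σ (chainC1 c₁ u)) (chainC1 c₁ u) := by
  have hT := noBad true c₁ u hσ
  have hF := noBad false c₁ u hσ
  generalize chainC1 c₁ u = v at *
  rw [tau_eq, sigma_eq] at h
  rw [sigma_eq]
  rcases minrep_exists v with ⟨k, hk⟩ | ⟨c, t, hm⟩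
  · have hk : IsConj v (gb ^ k) := by
      rcases hk with rfl | hk
      · exact IsConj.refl _
      · exact hk
    have h1 := isConj_map (tsub 1) hk
    have hb : tsub 1 gb = gb := by simp [tsub, gb]
    rw [map_zpow, hb] at h1
    exact h1.trans hk.symm
  · have hch : (c :: t ++ [c]).IsChain Rf := by
      refine chain_cyc (fun l x z hm hz => ⟨fun hs => hm.opp hz hs, fun hx hz' => ?_, fun hx hz' => ?_⟩) hm
      · have := hm.nonbad hT hz hx hz'
        simp [thg] at this
        exact this
      · have := hm.nonbad hF hz hx hz'
        simpa [thg] using this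
    have h1 := (isConj_map (tsub 1) hm.1).trans (conj_adj c t)
    have h2 := isConj_map (tsub 0) h1
    rw [cyclen_conj h1, cyclen_conj h2] at h
    obtain ⟨c', t', e, e1⟩ : ∃ c' t', adj (c :: t) c.1 = c' :: t' ∧ c.1 = c'.1 := ⟨_, _, rfl, rfl⟩
    have h3 := adj_chain (c :: t) c c' e1 hch
    have h4 := same_adj (c :: t) c.1
    rw [e] at h h3 h4
    have h5 := key_lower c' t' h3
    have h6 := len_mk_le ((c' :: t').flatMap gw)
    rw [mk_W] at h6
    have h7 := cyclen_le_len (prodg (c' :: t'))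
    rw [← e1] at h5
    have h8 : same (c :: t) c.1 = 0 := by omega
    rw [adj_of_same _ _ h8] at h1
    exact h1.trans hm.1.symm

/-- Lemma 4.3.5. -/
theorem stmt7 (u : F) (c₁ : List (ℕ × ℕ)) (hne : c₁ ≠ [])
    (hσ : cyclen u + 1 ≤ sigmaCount c₁)
    (h : cyclen (τ ((σ * chainC1 c₁) u)) = cyclen ((σ * chainC1 c₁) u)) :
    ∀ i : ℕ, cyclen ((σ ^ (i + 1)) (chainC1 c₁ u)) = cyclen ((σ ^ i) (chainC1 c₁ u)) := by
  intro i
  have h1 := sigma_conj c₁ u hσ h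
  rw [pow_succ, MulAut.mul_apply]
  exact cyclen_conj (isConj_map (σ ^ i).toMonoidHom h1)
end
end

section
/- Let u, v ∈ F₂ with ‖u‖ ≥ ‖v‖, let ψ be a chain of type (C1) with |ψ| ≥ 2‖u‖+3, and put k = ‖u‖+1. Suppose that for every chain ψ' of type (C1) with |ψ'| < |ψ| one has: ‖σ^{k+1}ψ'(u)‖ = ‖σ^{k}ψ'(u)‖ if and only if ‖σ^{k+1}ψ'(v)‖ = ‖σ^{k}ψ'(v)‖, and ‖τ^{k+1}ψ'(u)‖ = ‖τ^{k}ψ'(u)‖ if and only if ‖τ^{k+1}ψ'(v)‖ = ‖τ^{k}ψ'(v)‖. Then also: (i) ‖σ^{k+1}ψ(u)‖ = ‖σ^{k}ψ(u)‖ if and only if ‖σ^{k+1}ψ(v)‖ = ‖σ^{k}ψ(v)‖, and (ii) ‖τ^{k+1}ψ(u)‖ = ‖τ^{k}ψ(u)‖ if and only if ‖τ^{k+1}ψ(v)‖ = ‖τ^{k}ψ(v)‖. -/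
noncomputable section

namespace P8

/-! ### Basic facts on lengths -/

theorem len_mul_le (x y : F) : len (x * y) ≤ len x + len y := FreeGroup.norm_mul_le x y

theorem len_inv (x : F) : len x⁻¹ = len x := FreeGroup.norm_inv_eq

theorem len_one : len (1 : F) = 0 := by simp [len]

theorem len_pow_le (x : F) (n : ℕ) : len (x ^ n) ≤ n * len x := by
  induction n with
  | zero => simp [len_one]
  | succ n ih =>
    rw [pow_succ]
    have := len_mul_le (x ^ n) x
    have h : (n + 1) * len x = n * len x + len x := by ring
    omega

theorem cyclen_spec (w : F) : ∃ g : F, len (g * w * g⁻¹) = cyclen w := by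
  have : {n | ∃ g : F, len (g * w * g⁻¹) = n}.Nonempty := ⟨_, 1, rfl⟩
  exact Nat.sInf_mem this

theorem cyclen_le (w g : F) : cyclen w ≤ len (g * w * g⁻¹) :=
  Nat.sInf_le ⟨g, rfl⟩

theorem cyclen_le_len (w : F) : cyclen w ≤ len w := by simpa using cyclen_le w 1

theorem cyclen_conj_le {x y : F} (h : IsConj x y) : cyclen x ≤ cyclen y := by
  obtain ⟨g, hg⟩ := isConj_iff.1 h
  obtain ⟨k, hk⟩ := cyclen_spec y
  rw [← hk, ← hg]
  have := cyclen_le x (k * g)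
  simpa [mul_assoc] using this

theorem cyclen_conj {x y : F} (h : IsConj x y) : cyclen x = cyclen y :=
  le_antisymm (cyclen_conj_le h) (cyclen_conj_le h.symm)

theorem cyclen_inv_le (x : F) : cyclen x⁻¹ ≤ cyclen x := by
  obtain ⟨k, hk⟩ := cyclen_spec x
  rw [← hk, ← len_inv]
  have := cyclen_le x⁻¹ k
  simpa [mul_assoc] using this

theorem cyclen_inv (x : F) : cyclen x⁻¹ = cyclen x :=
  le_antisymm (cyclen_inv_le x) (by simpa using cyclen_inv_le x⁻¹)

theorem cyclen_sq_le (x : F) : cyclen (x ^ 2) ≤ 2 * cyclen x := by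
  obtain ⟨k, hk⟩ := cyclen_spec x
  rw [← hk]
  refine (cyclen_le _ k).trans ?_
  rw [← conj_pow]
  exact len_pow_le _ _

/-- Linear growth of the powers bounds the cyclic length from below. -/
theorem le_cyclen_of_pow (z : F) (m : ℕ) (h : ∀ n, n * m ≤ len (z ^ n)) : m ≤ cyclen z := by
  obtain ⟨k, hk⟩ := cyclen_spec z
  have key : ∀ n, n * m ≤ 2 * len k + n * cyclen z := by
    intro n
    have e : z ^ n = k⁻¹ * (k * z * k⁻¹) ^ n * k := by rw [conj_pow]; group
    have h1 := h n
    rw [e] at h1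
    have h2 := len_mul_le (k⁻¹ * (k * z * k⁻¹) ^ n) k
    have h3 := len_mul_le k⁻¹ ((k * z * k⁻¹) ^ n)
    have h4 := len_pow_le (k * z * k⁻¹) n
    rw [hk] at h4
    rw [len_inv] at h3
    omega
  by_contra hc
  push Not at hc
  have h1 := key (2 * len k + 1)
  have h2 : (2 * len k + 1) * (cyclen z + 1) ≤ (2 * len k + 1) * m := Nat.mul_le_mul_left _ hc
  have h3 : (2 * len k + 1) * (cyclen z + 1) = (2 * len k + 1) * cyclen z + (2 * len k + 1) := by ring
  omega

theorem len_mk {l : List (Fin 2 × Bool)} (h : FreeGroup.IsReduced l) :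
    (FreeGroup.mk l).toWord = l := by
  rw [FreeGroup.toWord_mk, h.reduce_eq]

theorem toWord_pow_mk {l : List (Fin 2 × Bool)} (h : FreeGroup.IsCyclicallyReduced l) (n : ℕ) :
    ((FreeGroup.mk l) ^ n).toWord = (List.replicate n l).flatten := by
  rw [FreeGroup.toWord_pow, len_mk h.1, (h.flatten_replicate n).1.reduce_eq]

theorem cyclen_mk {l : List (Fin 2 × Bool)} (h : FreeGroup.IsCyclicallyReduced l) :
    cyclen (FreeGroup.mk l) = l.length := by
  apply le_antisymm
  · refine (cyclen_le_len _).trans ?_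
    rw [len, len_mk h.1]
  · apply le_cyclen_of_pow
    intro n
    rw [len, toWord_pow_mk h]
    simp

/-! ### Positive subwords -/

abbrev Lt := Fin 2 × Bool

/-- Words in the letters `a` and `b⁻¹`. -/
def Pos (P : List Lt) : Prop := ∀ x ∈ P, x = (0, true) ∨ x = (1, false)

def cA (P : List Lt) : ℕ := P.count (0, true)
def cB (P : List Lt) : ℕ := P.count (1, false)

/-- `D p q n l`: the list `l` contains `n` disjoint positive subwords with at least `p` letters
`a` and `q` letters `b⁻¹`. -/
def D (p q : ℕ) : ℕ → List Lt → Prop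
  | 0, _ => True
  | n + 1, l => ∃ X P Y, l = X ++ (P ++ Y) ∧ Pos P ∧ p ≤ cA P ∧ q ≤ cB P ∧ D p q n Y

theorem Pos_length {P : List Lt} (h : Pos P) : P.length = cA P + cB P := by
  induction P with
  | nil => simp [cA, cB]
  | cons x P ih =>
    have := ih (fun y hy => h y (by simp [hy]))
    have hx := h x (by simp)
    rcases hx with rfl | rfl <;> simp [cA, cB] at * <;> omega

theorem D_length {p q n : ℕ} {l : List Lt} (h : D p q n l) : n * (p + q) ≤ l.length := by
  induction n generalizing l with
  | zero => simp
  | succ n ih =>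
    obtain ⟨X, P, Y, rfl, hP, hp, hq, hY⟩ := h
    have h1 := ih hY
    have h2 := Pos_length hP
    have : (n + 1) * (p + q) = n * (p + q) + (p + q) := by ring
    simp only [List.length_append]
    omega

theorem D_prefix {p q n : ℕ} {l : List Lt} (Z : List Lt) (h : D p q n l) : D p q n (Z ++ l) := by
  cases n with
  | zero => trivial
  | succ n =>
    obtain ⟨X, P, Y, rfl, h⟩ := h
    exact ⟨Z ++ X, P, Y, by simp, h⟩

theorem D_tail {p q n : ℕ} {l : List Lt} {c : Lt} (hc : ¬ (c = (0, true) ∨ c = (1, false)))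
    (hp : 1 ≤ p) (h : D p q n (c :: l)) : D p q n l := by
  cases n with
  | zero => trivial
  | succ n =>
    obtain ⟨X, P, Y, e, hP, h1, h2, h3⟩ := h
    cases X with
    | nil =>
      cases P with
      | nil => simp [cA] at h1; omega
      | cons x P =>
        simp at e
        exact absurd (hP c (by simp [e.1])) hc
    | cons x X =>
      simp at e
      exact ⟨X, P, Y, e.2, hP, h1, h2, h3⟩

theorem D_snoc {p q n : ℕ} {l P X : List Lt} (h : D p q n l) (hP : Pos P) (hp : p ≤ cA P)
    (hq : q ≤ cB P) : D p q (n + 1) (l ++ (P ++ X)) := by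
  induction n generalizing l with
  | zero => exact ⟨l, P, X, rfl, hP, hp, hq, trivial⟩
  | succ n ih =>
    obtain ⟨X', P', Y, rfl, h1, h2, h3, h4⟩ := h
    exact ⟨X', P', Y ++ (P ++ X), by simp, h1, h2, h3, ih h4⟩

theorem D_replicate {p q : ℕ} {X P Y : List Lt} (hP : Pos P) (hp : p ≤ cA P) (hq : q ≤ cB P)
    (n : ℕ) : D p q n (List.replicate n (X ++ (P ++ Y))).flatten := by
  induction n with
  | zero => trivial
  | succ n ih =>
    rw [List.replicate_succ, List.flatten_cons]
    exact ⟨X, P, Y ++ (List.replicate n (X ++ (P ++ Y))).flatten, by simp, hP, hp, hq,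
      D_prefix _ ih⟩

/-! ### The transducer computing `σ⁻¹` on reduced words -/

def out (x : Lt) : List Lt :=
  if x = (0, true) then [(0, true), (1, false)]
  else if x = (0, false) then [(1, true), (0, false)] else [x]

def S : List Lt → List Lt
  | [] => []
  | [x] => out x
  | x :: y :: t =>
    if x = (0, true) ∧ y = (1, true) then (0, true) :: S t
    else if x = (1, false) ∧ y = (0, false) then (0, false) :: S t
    else out x ++ S (y :: t)

theorem lt_cases (x : Lt) : x = (0, true) ∨ x = (0, false) ∨ x = (1, true) ∨ x = (1, false) := by
  revert x; decide

theorem σ_inv_a : σ⁻¹ ga = ga * gb⁻¹ := by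
  rw [MulAut.inv_apply, MulEquiv.symm_apply_eq]; simp [σ, mkAut, ga, gb]
theorem σ_inv_b : σ⁻¹ gb = gb := by
  rw [MulAut.inv_apply, MulEquiv.symm_apply_eq]; simp [σ, mkAut, ga, gb]

theorem mk_cons (x : Lt) (t : List Lt) :
    FreeGroup.mk (x :: t) = FreeGroup.mk [x] * FreeGroup.mk t := by
  rw [FreeGroup.mul_mk]; rfl

theorem mk0t : (FreeGroup.mk [(0, true)] : F) = ga := rfl
theorem mk1t : (FreeGroup.mk [(1, true)] : F) = gb := rfl
theorem mk0f : (FreeGroup.mk [(0, false)] : F) = ga⁻¹ := rfl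
theorem mk1f : (FreeGroup.mk [(1, false)] : F) = gb⁻¹ := rfl
theorem mk_nil : (FreeGroup.mk [] : F) = 1 := rfl

theorem mk_out (x : Lt) : FreeGroup.mk (out x) = σ⁻¹ (FreeGroup.mk [x]) := by
  rcases lt_cases x with rfl | rfl | rfl | rfl
  · rw [mk0t, σ_inv_a]; rfl
  · rw [mk0f, map_inv, σ_inv_a, mul_inv_rev, inv_inv]; rfl
  · rw [mk1t, σ_inv_b]; rfl
  · rw [mk1f, map_inv, σ_inv_b]; rfl

theorem mk_S (l : List Lt) : FreeGroup.mk (S l) = σ⁻¹ (FreeGroup.mk l) := by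
  induction l using S.induct with
  | case1 => simp [S, mk_nil]
  | case2 x => simp only [S]; exact mk_out x
  | case3 x y t h ih =>
    obtain ⟨rfl, rfl⟩ := h
    rw [S, if_pos ⟨rfl, rfl⟩, mk_cons (0, true) (S t), ih, mk_cons (0, true) (_ :: _), mk_cons (1, true)]
    simp only [mk0t, mk1t, map_mul, σ_inv_a, σ_inv_b]
    group
  | case4 x y t h h' ih =>
    obtain ⟨rfl, rfl⟩ := h'
    rw [S, if_neg (by simp), if_pos ⟨rfl, rfl⟩, mk_cons (0, false) (S t), ih, mk_cons (1, false) (_ :: _),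
      mk_cons (0, false) t]
    simp only [mk0f, mk1f, map_mul, map_inv, σ_inv_a, σ_inv_b]
    group
  | case5 x y t h h' ih =>
    rw [S, if_neg h, if_neg h', ← FreeGroup.mul_mk, ih, mk_out, mk_cons x (_ :: _), map_mul]

/-- Possible first letters of `S (x :: t)`. -/
theorem S_head (x : Lt) (t : List Lt) : ∃ h r, S (x :: t) = h :: r ∧
    (x = (0, true) → h = (0, true)) ∧ (x = (0, false) → h = (1, true)) ∧
    (x = (1, true) → h = (1, true)) ∧ (x = (1, false) → h = (1, false) ∨ h = (0, false)) ∧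
    (x = (1, false) → t.head? ≠ some (0, false) → h = (1, false)) := by
  cases t with
  | nil => rcases lt_cases x with rfl | rfl | rfl | rfl <;> simp [S, out]
  | cons y t =>
    rw [S]
    split_ifs with h h'
    · obtain ⟨rfl, rfl⟩ := h; simp
    · obtain ⟨rfl, rfl⟩ := h'; simp
    · rcases lt_cases x with rfl | rfl | rfl | rfl <;> simp [out]

theorem red_cons {x : Lt} {l : List Lt} (h : FreeGroup.IsReduced l)
    (h' : ∀ y ∈ l.head?, x.1 = y.1 → x.2 = y.2) : FreeGroup.IsReduced (x :: l) := by
  cases l with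
  | nil => exact FreeGroup.IsReduced.singleton
  | cons y l => exact FreeGroup.isReduced_cons_cons.2 ⟨h' y (by simp), h⟩

theorem red_tail {x : Lt} {l : List Lt} (h : FreeGroup.IsReduced (x :: l)) :
    FreeGroup.IsReduced l := h.infix ⟨[x], [], by simp⟩

theorem S_reduced (l : List Lt) (hl : FreeGroup.IsReduced l) : FreeGroup.IsReduced (S l) := by
  induction l using S.induct with
  | case1 => simp [S]
  | case2 x => rcases lt_cases x with rfl | rfl | rfl | rfl <;> simp [S, out, FreeGroup.IsReduced]
  | case3 x y t h ih =>
    obtain ⟨rfl, rfl⟩ := h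
    rw [S, if_pos ⟨rfl, rfl⟩]
    refine red_cons (ih (red_tail (red_tail hl))) ?_
    cases t with
    | nil => simp [S]
    | cons z t =>
      have h1 := (FreeGroup.isReduced_cons_cons.1 (red_tail hl)).1
      obtain ⟨h, r, e, hh⟩ := S_head z t
      rw [e]
      rcases lt_cases z with rfl | rfl | rfl | rfl <;> simp at * <;> simp [hh]
  | case4 x y t h h' ih =>
    obtain ⟨rfl, rfl⟩ := h'
    rw [S, if_neg (by simp), if_pos ⟨rfl, rfl⟩]
    refine red_cons (ih (red_tail (red_tail hl))) ?_
    cases t with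
    | nil => simp [S]
    | cons z t =>
      have h1 := (FreeGroup.isReduced_cons_cons.1 (red_tail hl)).1
      obtain ⟨h, r, e, hh⟩ := S_head z t
      rw [e]
      rcases lt_cases z with rfl | rfl | rfl | rfl <;> simp at *
      · simp [hh]
      · simp [hh]
      · rcases hh.1 with rfl | rfl <;> simp
  | case5 x y t h h' ih =>
    rw [S, if_neg h, if_neg h']
    have h2 := ih (red_tail hl)
    have h1 := (FreeGroup.isReduced_cons_cons.1 hl).1
    obtain ⟨c, r, e, hh⟩ := S_head y t
    rw [e] at h2 ⊢
    rcases lt_cases x with rfl | rfl | rfl | rfl <;>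
    rcases lt_cases y with rfl | rfl | rfl | rfl <;> simp [out] at * <;>
    first
    | (obtain rfl := hh; simp [FreeGroup.isReduced_cons_cons, h2])
    | (rcases hh.1 with rfl | rfl <;> simp [FreeGroup.isReduced_cons_cons, h2])

theorem toWord_σ_inv (g : F) : (σ⁻¹ g).toWord = S g.toWord := by
  conv_lhs => rw [← FreeGroup.mk_toWord (x := g), ← mk_S]
  exact len_mk (S_reduced _ FreeGroup.isReduced_toWord)

theorem S_append (X Z : List Lt) (hZ : ∀ z ∈ Z.head?, z = (0, true) ∨ z = (1, false)) :
    S (X ++ Z) = S X ++ S Z := by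
  induction X using S.induct with
  | case1 => simp [S]
  | case2 x =>
    cases Z with
    | nil => simp [S]
    | cons z Z =>
      have := hZ z (by simp)
      simp only [List.cons_append, List.nil_append]
      rw [S.eq_3, if_neg, if_neg]
      · simp [S]
      · rintro ⟨rfl, rfl⟩; simp at this
      · rintro ⟨rfl, rfl⟩; simp at this
  | case3 x y t h ih =>
    obtain ⟨rfl, rfl⟩ := h
    simp [S, ih]
  | case4 x y t h h' ih =>
    obtain ⟨rfl, rfl⟩ := h'
    simp [S, ih]
  | case5 x y t h h' ih =>
    simp only [List.cons_append] at ih ⊢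
    rw [S, if_neg h, if_neg h', S, if_neg h, if_neg h', ih]
    simp

theorem S_pos (P Y : List Lt) (hP : Pos P) (hne : P ≠ []) :
    ∃ P' Z Y', S (P ++ Y) = P' ++ (Z ++ S Y') ∧ Pos P' ∧ cA P ≤ cA P'
      ∧ cA P + cB P ≤ cB P' + 1 ∧
      (Y' = Y ∨ ∃ c, Y = c :: Y' ∧ ¬ (c = (0, true) ∨ c = (1, false))) := by
  induction P with
  | nil => exact absurd rfl hne
  | cons x P ih =>
    have hx := hP x (by simp)
    have hP' : Pos P := fun y hy => hP y (by simp [hy])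
    cases P with
    | nil =>
      cases Y with
      | nil =>
        rcases hx with rfl | rfl
        · exact ⟨[(0, true), (1, false)], [], [], by simp [S, out], by simp [Pos], by simp [cA],
            by simp [cA, cB], Or.inl rfl⟩
        · exact ⟨[(1, false)], [], [], by simp [S, out], by simp [Pos], by simp [cA],
            by simp [cA, cB], Or.inl rfl⟩
      | cons y Y =>
        rcases hx with rfl | rfl
        · by_cases hy : y = (1, true)
          · subst hy
            exact ⟨[(0, true)], [], Y, by simp [S], by simp [Pos], by simp [cA],
              by simp [cA, cB], Or.inr ⟨_, rfl, by simp⟩⟩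
          · exact ⟨[(0, true), (1, false)], [], y :: Y, by simp [S, out, hy], by simp [Pos],
              by simp [cA], by simp [cA, cB], Or.inl rfl⟩
        · by_cases hy : y = (0, false)
          · subst hy
            exact ⟨[], [(0, false)], Y, by simp [S], by simp [Pos], by simp [cA],
              by simp [cA, cB], Or.inr ⟨_, rfl, by simp⟩⟩
          · exact ⟨[(1, false)], [], y :: Y, by simp [S, out, hy], by simp [Pos],
              by simp [cA], by simp [cA, cB], Or.inl rfl⟩
    | cons y P =>
      obtain ⟨P', Z, Y', e, h1, h2, h3, h4⟩ := ih hP' (by simp)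
      have hy := hP' y (by simp)
      refine ⟨out x ++ P', Z, Y', ?_, ?_, ?_, ?_, h4⟩
      · simp only [List.cons_append] at e ⊢
        rw [S, if_neg, if_neg, e]
        · simp
        · rintro ⟨rfl, rfl⟩; simp at hy
        · rintro ⟨rfl, rfl⟩; simp at hy
      · intro z hz
        rw [List.mem_append] at hz
        rcases hz with hz | hz
        · rcases hx with rfl | rfl <;> simp [out] at hz
          · exact hz
          · exact Or.inr hz
        · exact h1 z hz
      · rcases hx with rfl | rfl <;> simp [out, cA] at * <;> omega
      · rcases hx with rfl | rfl <;> simp [out, cA, cB] at * <;> omega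

theorem D_S {p q n : ℕ} {l : List Lt} (hp : 1 ≤ p) (h : D p q n l) :
    D p (p + q - 1) n (S l) := by
  induction n generalizing l with
  | zero => trivial
  | succ n ih =>
    obtain ⟨X, P, Y, rfl, hP, h1, h2, h3⟩ := h
    have hne : P ≠ [] := by rintro rfl; simp [cA] at h1; omega
    obtain ⟨P', Z, Y', e, g1, g2, g3, g4⟩ := S_pos P Y hP hne
    have hY' : D p q n Y' := by
      rcases g4 with rfl | ⟨c, rfl, hc⟩
      · exact h3
      · exact D_tail hc hp h3
    rw [S_append, e]
    · exact ⟨S X, P', Z ++ S Y', rfl, g1, by omega, by omega, D_prefix _ (ih hY')⟩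
    · cases P with
      | nil => exact absurd rfl hne
      | cons x P => simpa using hP x (by simp)

/-- The version of `D` for group elements. -/
def Dg (p q n : ℕ) (g : F) : Prop := D p q n g.toWord

theorem Dg_σ {p q n : ℕ} {g : F} (hp : 1 ≤ p) (h : Dg p q n g) :
    Dg p (p + q - 1) n (σ⁻¹ g) := by
  rw [Dg, toWord_σ_inv]; exact D_S hp h

/-! ### The swap -/

def sw : MulAut F := mkAut gb ga gb ga
  (by simp [ga, gb]) (by simp [ga, gb]) (by simp [ga, gb]) (by simp [ga, gb])

theorem sw_a : sw ga = gb := by simp [sw, mkAut, ga]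
theorem sw_b : sw gb = ga := by simp [sw, mkAut, gb]

theorem aut_ext {f g : MulAut F} (ha : f ga = g ga) (hb : f gb = g gb) : f = g := by
  have : f.toMonoidHom = g.toMonoidHom := by
    ext i
    fin_cases i
    · exact ha
    · exact hb
  ext x
  exact DFunLike.congr_fun this x

theorem σ_a : σ ga = ga * gb := by simp [σ, mkAut, ga]
theorem σ_b : σ gb = gb := by simp [σ, mkAut, gb]
theorem τ_a : τ ga = ga := by simp [τ, mkAut, ga]
theorem τ_b : τ gb = gb * ga := by simp [τ, mkAut, gb]

theorem sw_sw : sw * sw = 1 := by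
  apply aut_ext <;> simp [MulAut.mul_apply, sw_a, sw_b]

theorem sw_inv : sw⁻¹ = sw := inv_eq_of_mul_eq_one_left sw_sw

theorem sw_sw_apply (g : F) : sw (sw g) = g := by
  rw [← MulAut.mul_apply, sw_sw]; rfl

theorem sw_σ : sw * σ * sw = τ := by
  apply aut_ext <;> simp [MulAut.mul_apply, sw_a, sw_b, σ_a, σ_b, τ_a, τ_b]

theorem sw_τ : sw * τ * sw = σ := by
  apply aut_ext <;> simp [MulAut.mul_apply, sw_a, sw_b, σ_a, σ_b, τ_a, τ_b]

def swL (x : Lt) : Lt := (if x.1 = 0 then 1 else 0, x.2)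

theorem mk_sw (l : List Lt) : sw (FreeGroup.mk l) = FreeGroup.mk (l.map swL) := by
  induction l with
  | nil => simp [mk_nil]
  | cons x t ih =>
    rw [List.map_cons, mk_cons, map_mul, ih, mk_cons (swL x)]
    congr 1
    rcases lt_cases x with rfl | rfl | rfl | rfl
    · exact sw_a
    · rw [mk0f, map_inv, sw_a]; rfl
    · exact sw_b
    · rw [mk1f, map_inv, sw_b]; rfl

theorem swL_red {l : List Lt} (h : FreeGroup.IsReduced l) : FreeGroup.IsReduced (l.map swL) := by
  rw [FreeGroup.IsReduced, List.isChain_map]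
  refine List.IsChain.imp ?_ h
  rintro ⟨a, s⟩ ⟨b, t⟩
  revert a b s t
  decide

theorem toWord_sw (g : F) : (sw g).toWord = g.toWord.map swL := by
  conv_lhs => rw [← FreeGroup.mk_toWord (x := g), mk_sw]
  exact len_mk (swL_red FreeGroup.isReduced_toWord)

theorem len_sw (g : F) : len (sw g) = len g := by simp [len, toWord_sw]

theorem cyclen_sw_le (g : F) : cyclen (sw g) ≤ cyclen g := by
  obtain ⟨k, hk⟩ := cyclen_spec g
  rw [← hk, ← len_sw]
  have := cyclen_le (sw g) (sw k)
  simpa using this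

theorem cyclen_sw (g : F) : cyclen (sw g) = cyclen g :=
  le_antisymm (cyclen_sw_le g) (by simpa [sw_sw_apply] using cyclen_sw_le (sw g))

def rs (l : List Lt) : List Lt := FreeGroup.invRev (l.map swL)

theorem rs_append (l m : List Lt) : rs (l ++ m) = rs m ++ rs l := by simp [rs]

theorem rs_pos {P : List Lt} (h : Pos P) : Pos (rs P) ∧ cA (rs P) = cB P ∧ cB (rs P) = cA P := by
  induction P with
  | nil => simp [rs, Pos, cA, cB]
  | cons x P ih =>
    have hx := h x (by simp)
    obtain ⟨h1, h2, h3⟩ := ih (fun y hy => h y (by simp [hy]))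
    have e : rs (x :: P) = rs P ++ rs [x] := rs_append [x] P
    rw [e]
    refine ⟨?_, ?_, ?_⟩
    · intro z hz
      rw [List.mem_append] at hz
      rcases hz with hz | hz
      · exact h1 z hz
      · rcases hx with rfl | rfl <;> simp [rs, swL, FreeGroup.invRev] at hz <;> simp [hz]
    · rcases hx with rfl | rfl <;>
        simp [rs, swL, FreeGroup.invRev, cA, cB] at * <;> omega
    · rcases hx with rfl | rfl <;>
        simp [rs, swL, FreeGroup.invRev, cA, cB] at * <;> omega

theorem D_rs {p q n : ℕ} {l : List Lt} (h : D p q n l) : D q p n (rs l) := by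
  induction n generalizing l with
  | zero => trivial
  | succ n ih =>
    obtain ⟨X, P, Y, rfl, hP, h1, h2, h3⟩ := h
    rw [rs_append, rs_append, List.append_assoc]
    obtain ⟨g1, g2, g3⟩ := rs_pos hP
    exact D_snoc (ih h3) g1 (by omega) (by omega)

theorem Dg_sw {p q n : ℕ} {g : F} (h : Dg p q n g) : Dg q p n (sw g)⁻¹ := by
  rw [Dg, FreeGroup.toWord_inv, toWord_sw]; exact D_rs h

theorem τ_inv_apply (g : F) : τ⁻¹ g = (sw (σ⁻¹ (sw g)⁻¹))⁻¹ := by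
  rw [← sw_σ]
  simp only [map_inv, inv_inv, mul_inv_rev, sw_inv]
  rfl

theorem Dg_τ {p q n : ℕ} {g : F} (hq : 1 ≤ q) (h : Dg p q n g) :
    Dg (q + p - 1) q n (τ⁻¹ g) := by
  rw [τ_inv_apply]
  exact Dg_sw (Dg_σ hq (Dg_sw h))


/-! ### Chains -/

inductive Ch : ℕ → MulAut F → Prop
  | one : Ch 0 1
  | s {n : ℕ} {φ : MulAut F} : Ch n φ → Ch (n + 1) (σ * φ)
  | t {n : ℕ} {φ : MulAut F} : Ch n φ → Ch (n + 1) (τ * φ)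

theorem Ch_σ_pow {n : ℕ} {φ : MulAut F} (h : Ch n φ) (l : ℕ) : Ch (l + n) (σ ^ l * φ) := by
  induction l with
  | zero => simpa using h
  | succ l ih =>
    rw [pow_succ', mul_assoc, show l + 1 + n = (l + n) + 1 by ring]
    exact Ch.s ih

theorem Ch_τ_pow {n : ℕ} {φ : MulAut F} (h : Ch n φ) (l : ℕ) : Ch (l + n) (τ ^ l * φ) := by
  induction l with
  | zero => simpa using h
  | succ l ih =>
    rw [pow_succ', mul_assoc, show l + 1 + n = (l + n) + 1 by ring]
    exact Ch.t ih

theorem Ch_chain (c : List (ℕ × ℕ)) : Ch (chainLen c) (chainC1 c) := by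
  induction c with
  | nil => exact Ch.one
  | cons x c ih =>
    have h := Ch_τ_pow (Ch_σ_pow ih x.1) x.2
    have e : chainLen (x :: c) = x.2 + (x.1 + chainLen c) := by
      simp [chainLen, sigmaCount, tauCount]; ring
    have e' : chainC1 (x :: c) = τ ^ x.2 * (σ ^ x.1 * chainC1 c) := by
      simp [chainC1, mul_assoc]
    rw [e, e']; exact h

theorem chain_of_Ch {n : ℕ} {φ : MulAut F} (h : Ch n φ) :
    ∃ c : List (ℕ × ℕ), c ≠ [] ∧ chainLen c = n ∧ chainC1 c = φ := by
  induction h with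
  | one => exact ⟨[(0, 0)], by simp, by simp [chainLen, sigmaCount, tauCount], by simp [chainC1]⟩
  | s h ih =>
    obtain ⟨c, h1, rfl, rfl⟩ := ih
    exact ⟨(1, 0) :: c, by simp, by simp [chainLen, sigmaCount, tauCount]; ring, by simp [chainC1]⟩
  | t h ih =>
    obtain ⟨c, h1, rfl, rfl⟩ := ih
    exact ⟨(0, 1) :: c, by simp, by simp [chainLen, sigmaCount, tauCount]; ring, by simp [chainC1]⟩

theorem Ch_sw {n : ℕ} {φ : MulAut F} (h : Ch n φ) : Ch n (sw * φ * sw) := by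
  induction h with
  | one => rw [mul_one, sw_sw]; exact Ch.one
  | @s n φ h ih =>
    have : sw * (σ * φ) * sw = (sw * σ * sw) * (sw * φ * sw) := by
      simp only [mul_assoc]; rw [← mul_assoc sw sw (φ * sw), sw_sw, one_mul]
    rw [this, sw_σ]; exact Ch.t ih
  | @t n φ h ih =>
    have : sw * (τ * φ) * sw = (sw * τ * sw) * (sw * φ * sw) := by
      simp only [mul_assoc]; rw [← mul_assoc sw sw (φ * sw), sw_sw, one_mul]
    rw [this, sw_τ]; exact Ch.s ih

theorem transfer {L : ℕ} {φ : MulAut F} (h : Ch L φ) (e p q : ℕ) (hp : e + 1 ≤ p)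
    (hq : e + 1 ≤ q) : ∃ p' q', p + q + e * L ≤ p' + q' ∧
      ∀ n g, Dg p q n g → Dg p' q' n (φ⁻¹ g) := by
  induction h generalizing p q with
  | one => exact ⟨p, q, by simp, fun n g h => by simpa using h⟩
  | @s n φ h ih =>
    obtain ⟨p', q', h1, h2⟩ := ih p (p + q - 1) hp (by omega)
    refine ⟨p', q', ?_, ?_⟩
    · have : e * (n + 1) = e * n + e := by ring
      omega
    · intro n g hg
      have := h2 n _ (Dg_σ (by omega) hg)
      rwa [mul_inv_rev]
  | @t n φ h ih =>
    obtain ⟨p', q', h1, h2⟩ := ih (q + p - 1) q (by omega) hq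
    refine ⟨p', q', ?_, ?_⟩
    · have : e * (n + 1) = e * n + e := by ring
      omega
    · intro n g hg
      have := h2 n _ (Dg_τ (by omega) hg)
      rwa [mul_inv_rev]

theorem isConj_map (f : MulAut F) {x y : F} (h : IsConj x y) : IsConj (f x) (f y) :=
  f.toMonoidHom.map_isConj h

theorem bound {L : ℕ} {φ : MulAut F} (h : Ch L φ) (e p q : ℕ) (hp : e + 1 ≤ p)
    (hq : e + 1 ≤ q) {z u : F} (hz : ∀ n, Dg p q n (z ^ n)) (hc : IsConj z (φ u)) :
    p + q + e * L ≤ cyclen u := by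
  obtain ⟨p', q', h1, h2⟩ := transfer h e p q hp hq
  have hc' := isConj_map φ⁻¹ hc
  rw [MulAut.inv_apply_self] at hc'
  rw [← cyclen_conj hc']
  refine h1.trans (le_cyclen_of_pow _ _ ?_)
  intro n
  rw [← map_pow]
  exact D_length (h2 n _ (hz n))

/-! ### Periodic reduced words -/

def PR (U : List Lt) : Prop := ∀ n, FreeGroup.IsReduced (List.replicate n U).flatten

theorem PR_of {U : List Lt} (h : FreeGroup.IsCyclicallyReduced U) : PR U :=
  fun n => (h.flatten_replicate n).1

theorem red_inv {U : List Lt} (h : FreeGroup.IsReduced U) :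
    FreeGroup.IsReduced (FreeGroup.invRev U) := by
  rw [FreeGroup.isReduced_iff_reduce_eq] at *
  rw [FreeGroup.reduce_invRev, h]

theorem PR_inv {U : List Lt} (h : PR U) : PR (FreeGroup.invRev U) := by
  intro n
  have : (List.replicate n (FreeGroup.invRev U)).flatten
      = FreeGroup.invRev (List.replicate n U).flatten := by
    induction n with
    | zero => simp
    | succ n ih =>
      rw [List.replicate_succ, List.replicate_succ', List.flatten_cons, List.flatten_concat,
        FreeGroup.invRev_append, ih]
  rw [this]
  exact red_inv (h n)

theorem mk_pow (U : List Lt) (n : ℕ) :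
    (FreeGroup.mk U) ^ n = FreeGroup.mk (List.replicate n U).flatten := by
  induction n with
  | zero => simp [mk_nil]
  | succ n ih => rw [pow_succ', ih, FreeGroup.mul_mk, List.replicate_succ, List.flatten_cons]

theorem D_pow {p q : ℕ} {X P Y : List Lt} (h : PR (X ++ (P ++ Y))) (hP : Pos P) (hp : p ≤ cA P)
    (hq : q ≤ cB P) (n : ℕ) : Dg p q n ((FreeGroup.mk (X ++ (P ++ Y))) ^ n) := by
  rw [Dg, mk_pow, len_mk (h n)]
  exact D_replicate hP hp hq n

/-! ### The two stability conditions -/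

def Sg (w : F) : Prop := ∃ W : F, IsConj w (FreeGroup.lift ![gb, ga * gb * ga⁻¹] W)
def Tg (w : F) : Prop := ∃ W : F, IsConj w (FreeGroup.lift ![ga, gb * ga * gb⁻¹] W)

theorem hom_ext {G : Type*} [Group G] {f g : F →* G} (ha : f ga = g ga) (hb : f gb = g gb) :
    f = g := by
  ext i
  fin_cases i
  · exact ha
  · exact hb

theorem Sg_conj {x y : F} (h : IsConj x y) (hy : Sg y) : Sg x := by
  obtain ⟨W, hW⟩ := hy
  exact ⟨W, h.trans hW⟩

theorem Tg_conj {x y : F} (h : IsConj x y) (hy : Tg y) : Tg x := by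
  obtain ⟨W, hW⟩ := hy
  exact ⟨W, h.trans hW⟩

theorem Tg_of_Sg {w : F} (h : Sg w) : Tg (sw w) := by
  obtain ⟨W, hW⟩ := h
  refine ⟨W, ?_⟩
  have e : sw.toMonoidHom.comp (FreeGroup.lift ![gb, ga * gb * ga⁻¹])
      = FreeGroup.lift ![ga, gb * ga * gb⁻¹] := by
    apply hom_ext
    · change sw (FreeGroup.lift _ (FreeGroup.of 0)) = FreeGroup.lift _ (FreeGroup.of 0)
      simp [sw_b]
    · change sw (FreeGroup.lift _ (FreeGroup.of 1)) = FreeGroup.lift _ (FreeGroup.of 1)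
      simp [sw_b, sw_a]
  rw [← e]
  exact isConj_map sw hW

theorem Sg_of_Tg {w : F} (h : Tg w) : Sg (sw w) := by
  obtain ⟨W, hW⟩ := h
  refine ⟨W, ?_⟩
  have e : sw.toMonoidHom.comp (FreeGroup.lift ![ga, gb * ga * gb⁻¹])
      = FreeGroup.lift ![gb, ga * gb * ga⁻¹] := by
    apply hom_ext
    · change sw (FreeGroup.lift _ (FreeGroup.of 0)) = FreeGroup.lift _ (FreeGroup.of 0)
      simp [sw_a]
    · change sw (FreeGroup.lift _ (FreeGroup.of 1)) = FreeGroup.lift _ (FreeGroup.of 1)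
      simp [sw_b, sw_a]
  rw [← e]
  exact isConj_map sw hW

theorem Tg_sw (w : F) : Tg (sw w) ↔ Sg w :=
  ⟨fun h => by simpa [sw_sw_apply] using Sg_of_Tg h, Tg_of_Sg⟩

theorem Sg_sw (w : F) : Sg (sw w) ↔ Tg w :=
  ⟨fun h => by simpa [sw_sw_apply] using Tg_of_Sg h, Sg_of_Tg⟩

theorem σ_fix (W : F) : σ (FreeGroup.lift ![gb, ga * gb * ga⁻¹] W)
    = FreeGroup.lift ![gb, ga * gb * ga⁻¹] W := by
  have e : σ.toMonoidHom.comp (FreeGroup.lift ![gb, ga * gb * ga⁻¹])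
      = FreeGroup.lift ![gb, ga * gb * ga⁻¹] := by
    apply hom_ext
    · change σ (FreeGroup.lift _ (FreeGroup.of 0)) = FreeGroup.lift _ (FreeGroup.of 0)
      simp [σ_b]
    · change σ (FreeGroup.lift _ (FreeGroup.of 1)) = FreeGroup.lift _ (FreeGroup.of 1)
      simp [σ_b, σ_a, mul_assoc]
  exact DFunLike.congr_fun e W

theorem Sg_σ_conj {w : F} (h : Sg w) : IsConj (σ w) w := by
  obtain ⟨W, hW⟩ := h
  have := isConj_map σ hW
  rw [σ_fix] at this
  exact this.trans hW.symm

theorem Sg_pow_conj {w : F} (h : Sg w) (n : ℕ) : IsConj ((σ ^ n) w) w := by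
  induction n with
  | zero => exact IsConj.refl _
  | succ n ih =>
    rw [pow_succ', MulAut.mul_apply]
    exact (isConj_map σ ih).trans (Sg_σ_conj h)

theorem Sg_σ (w : F) : Sg (σ w) ↔ Sg w := by
  constructor
  · rintro ⟨W, hW⟩
    refine ⟨W, ?_⟩
    have := isConj_map σ⁻¹ hW
    rw [MulAut.inv_apply_self] at this
    rwa [← σ_fix, MulAut.inv_apply_self] at this
  · intro h
    exact Sg_conj (Sg_σ_conj h) h

/-! ### Powers of the commutator -/

def K : F := ga * gb * ga⁻¹ * gb⁻¹

def Comm (w : F) : Prop := ∃ m : ℤ, IsConj w (K ^ m)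

theorem Ch_K {n : ℕ} {φ : MulAut F} (h : Ch n φ) : φ K = K := by
  induction h with
  | one => rfl
  | s h ih => rw [MulAut.mul_apply, ih]; simp [K, σ_a, σ_b, mul_assoc]
  | t h ih => rw [MulAut.mul_apply, ih]; simp [K, τ_a, τ_b, mul_assoc]

theorem Comm_Ch {n : ℕ} {φ : MulAut F} (h : Ch n φ) (w : F) : Comm (φ w) ↔ Comm w := by
  constructor
  · rintro ⟨m, hm⟩
    refine ⟨m, ?_⟩
    have := isConj_map φ⁻¹ hm
    have e : φ⁻¹ K = K := by conv_lhs => rw [← Ch_K h, MulAut.inv_apply_self]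
    rwa [MulAut.inv_apply_self, map_zpow, e] at this
  · rintro ⟨m, hm⟩
    refine ⟨m, ?_⟩
    have := isConj_map φ hm
    rwa [map_zpow, Ch_K h] at this

theorem Sg_of_Comm {w : F} (h : Comm w) : Sg w := by
  obtain ⟨m, hm⟩ := h
  refine ⟨(FreeGroup.of 1 * (FreeGroup.of 0)⁻¹) ^ m, ?_⟩
  rw [map_zpow]
  simpa [K] using hm

theorem Tg_of_Comm {w : F} (h : Comm w) : Tg w := by
  obtain ⟨m, hm⟩ := h
  refine ⟨(FreeGroup.of 0 * (FreeGroup.of 1)⁻¹) ^ m, ?_⟩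
  rw [map_zpow]
  simpa [K, mul_assoc] using hm

theorem Comm_pow {z : F} (h : IsConj z K ∨ IsConj z K⁻¹) (n : ℕ) : Comm (z ^ n) := by
  rcases h with h | h
  · obtain ⟨g, hg⟩ := isConj_iff.1 h
    exact ⟨n, isConj_iff.2 ⟨g, by rw [← conj_pow, hg, zpow_natCast]⟩⟩
  · obtain ⟨g, hg⟩ := isConj_iff.1 h
    exact ⟨-n, isConj_iff.2 ⟨g, by rw [← conj_pow, hg, zpow_neg, zpow_natCast, inv_pow]⟩⟩

/-! ### Words in `b⁻¹a` and `ab⁻¹` -/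

def chi : F →* F := FreeGroup.lift ![gb⁻¹ * ga, ga * gb⁻¹]

theorem chi_a : chi ga = gb⁻¹ * ga := by simp [chi, ga]
theorem chi_b : chi gb = ga * gb⁻¹ := by simp [chi, gb]

def sub (x : Lt) : List Lt :=
  if x = (0, true) then [(1, false), (0, true)]
  else if x = (0, false) then [(0, false), (1, true)]
  else if x = (1, true) then [(0, true), (1, false)]
  else [(1, true), (0, false)]

theorem mk_sub (l : List Lt) : FreeGroup.mk (l.flatMap sub) = chi (FreeGroup.mk l) := by
  induction l with
  | nil => simp [mk_nil]
  | cons x l ih =>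
    rw [List.flatMap_cons, ← FreeGroup.mul_mk, ih, mk_cons x l, map_mul]
    congr 1
    rcases lt_cases x with rfl | rfl | rfl | rfl
    · rw [mk0t, chi_a]; rfl
    · rw [mk0f, map_inv, chi_a, mul_inv_rev, inv_inv]; rfl
    · rw [mk1t, chi_b]; rfl
    · rw [mk1f, map_inv, chi_b, mul_inv_rev, inv_inv]; rfl

theorem sub_red {l : List Lt} (h : FreeGroup.IsReduced l) :
    FreeGroup.IsReduced (l.flatMap sub) := by
  induction l with
  | nil => simp
  | cons x l ih =>
    have ih' := ih (red_tail h)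
    cases l with
    | nil => rcases lt_cases x with rfl | rfl | rfl | rfl <;> simp [sub]
    | cons y l =>
      have h1 := (FreeGroup.isReduced_cons_cons.1 h).1
      rw [List.flatMap_cons] at ih' ⊢
      rw [List.flatMap_cons]
      rcases lt_cases x with rfl | rfl | rfl | rfl <;>
      rcases lt_cases y with rfl | rfl | rfl | rfl <;> simp [sub] at * <;> exact ih'

theorem PR_sub {U : List Lt} (h : PR U) : PR (U.flatMap sub) := by
  intro n
  have : (List.replicate n (U.flatMap sub)).flatten = (List.replicate n U).flatten.flatMap sub := by
    induction n with
    | zero => simp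
    | succ n ih => simp [List.replicate_succ, ih]
  rw [this]
  exact sub_red (h n)

def nx (x : Lt) : Lt := (if x.1 = 0 then 1 else 0, !x.2)

theorem alt_pow (x : Lt) (V : List Lt) (h : List.IsChain (fun x y => y = nx x) (V ++ [x]))
    (hV : ∀ y ∈ V.head?, y = x) : ∃ m : ℕ, FreeGroup.mk V = (FreeGroup.mk [x, nx x] : F) ^ m := by
  induction V using List.twoStepInduction with
  | nil => exact ⟨0, by simp [mk_nil]⟩
  | singleton y =>
    obtain rfl := hV y (by simp)
    simp at h
    exfalso
    revert h y
    decide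
  | cons_cons y z t ih _ =>
    obtain rfl := hV y (by simp)
    simp only [List.cons_append, List.isChain_cons_cons] at h
    obtain ⟨rfl, h⟩ := h
    have hn : ∀ y, nx (nx y) = y := by decide
    obtain ⟨m, hm⟩ := ih (h.tail) (by
      intro w hw
      cases t with
      | nil => simp at hw
      | cons w' t =>
        simp at hw h
        rw [← hw, h.1, hn])
    refine ⟨m + 1, ?_⟩
    rw [pow_succ', ← hm, FreeGroup.mul_mk]
    rfl

theorem chi_nx (x : Lt) : IsConj (chi (FreeGroup.mk [x, nx x])) K ∨
    IsConj (chi (FreeGroup.mk [x, nx x])) K⁻¹ := by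
  rw [mk_cons, map_mul]
  rcases lt_cases x with rfl | rfl | rfl | rfl
  · left
    change IsConj (chi ga * chi gb⁻¹) K
    refine isConj_iff.2 ⟨gb, ?_⟩
    simp [chi_a, chi_b, K, mul_assoc]
  · right
    change IsConj (chi ga⁻¹ * chi gb) K⁻¹
    refine isConj_iff.2 ⟨ga, ?_⟩
    simp [chi_a, chi_b, K, mul_assoc]
  · right
    change IsConj (chi gb * chi ga⁻¹) K⁻¹
    refine isConj_iff.2 ⟨gb, ?_⟩
    simp [chi_a, chi_b, K, mul_assoc]
  · left
    change IsConj (chi gb⁻¹ * chi ga) K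
    refine isConj_iff.2 ⟨ga, ?_⟩
    simp [chi_a, chi_b, K, mul_assoc]

theorem conj_cycred (W : F) : ∃ V : List Lt, FreeGroup.IsCyclicallyReduced V ∧
    IsConj W (FreeGroup.mk V) := by
  refine ⟨FreeGroup.reduceCyclically W.toWord,
    FreeGroup.reduceCyclically.isCyclicallyReduced FreeGroup.isReduced_toWord, ?_⟩
  have := FreeGroup.reduceCyclically.conj_conjugator_reduceCyclically W.toWord
  apply IsConj.symm
  refine isConj_iff.2 ⟨FreeGroup.mk (FreeGroup.reduceCyclically.conjugator W.toWord), ?_⟩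
  rw [FreeGroup.inv_mk, FreeGroup.mul_mk, FreeGroup.mul_mk, this, FreeGroup.mk_toWord]

theorem Tg_σ_chi {w : F} (h : Tg (σ w)) : ∃ W : F, IsConj w (chi W) := by
  obtain ⟨W, hW⟩ := h
  refine ⟨W, ?_⟩
  have e : σ⁻¹.toMonoidHom.comp (FreeGroup.lift ![ga, gb * ga * gb⁻¹])
      = (MulAut.conj gb).toMonoidHom.comp chi := by
    apply hom_ext
    · change σ⁻¹ (FreeGroup.lift _ (FreeGroup.of 0)) = gb * chi ga * gb⁻¹
      rw [chi_a]
      simp only [FreeGroup.lift_apply_of, Matrix.cons_val_zero, σ_inv_a]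
      group
    · change σ⁻¹ (FreeGroup.lift _ (FreeGroup.of 1)) = gb * chi gb * gb⁻¹
      rw [chi_b]
      have e1 : FreeGroup.lift ![ga, gb * ga * gb⁻¹] (FreeGroup.of (1 : Fin 2)) = gb * ga * gb⁻¹ := by
        simp
      rw [e1, map_mul, map_mul, map_inv, σ_inv_a, σ_inv_b]
      all_goals simp only [mul_assoc]
  have h1 := isConj_map σ⁻¹ hW
  rw [MulAut.inv_apply_self] at h1
  have e' := DFunLike.congr_fun e W
  change σ⁻¹ _ = gb * chi W * gb⁻¹ at e'
  rw [e'] at h1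
  exact h1.trans (IsConj.symm (isConj_iff.2 ⟨gb, rfl⟩))

theorem isConj_pow' {x y : F} (h : IsConj x y) (n : ℕ) : IsConj (x ^ n) (y ^ n) := by
  obtain ⟨g, hg⟩ := isConj_iff.1 h
  exact isConj_iff.2 ⟨g, by rw [← conj_pow, hg]⟩

theorem isConj_inv' {x y : F} (h : IsConj x y) : IsConj x⁻¹ y⁻¹ := by
  obtain ⟨g, hg⟩ := isConj_iff.1 h
  exact isConj_iff.2 ⟨g, by rw [← conj_inv, hg]⟩

theorem chi_D {U X Y : List Lt} {c d : Lt} (h : PR U) (hU : U = X ++ c :: d :: Y)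
    (hc : c.2 = true) (hd : d.2 = true) (n : ℕ) : Dg 2 2 n (chi (FreeGroup.mk U) ^ n) := by
  have hs := PR_sub h
  rw [← mk_sub]
  have e : U.flatMap sub = X.flatMap sub ++ ((sub c ++ sub d) ++ Y.flatMap sub) := by
    rw [hU]; simp
  rw [e] at hs ⊢
  refine D_pow hs ?_ ?_ ?_ n
  · rcases lt_cases c with rfl | rfl | rfl | rfl <;>
    rcases lt_cases d with rfl | rfl | rfl | rfl <;> simp [sub, Pos] at *
  · rcases lt_cases c with rfl | rfl | rfl | rfl <;>
    rcases lt_cases d with rfl | rfl | rfl | rfl <;> simp [sub, cA] at *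
  · rcases lt_cases c with rfl | rfl | rfl | rfl <;>
    rcases lt_cases d with rfl | rfl | rfl | rfl <;> simp [sub, cB] at *

theorem nx_of : ∀ a b : Lt, a.2 ≠ b.2 → (a.1 = b.1 → a.2 = b.2) → b = nx a := by decide

theorem key_growth {L : ℕ} {φ : MulAut F} (h : Ch L φ) {u : F} (hT : Tg (σ (φ u)))
    (hL : 2 * cyclen u + 2 ≤ L) : Comm u := by
  obtain ⟨W, hW⟩ := Tg_σ_chi hT
  obtain ⟨V, hV, hWV⟩ := conj_cycred W
  have hc : IsConj (φ u) (chi (FreeGroup.mk V)) := hW.trans (chi.map_isConj hWV)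
  have hVV : FreeGroup.IsCyclicallyReduced (V ++ V) := by simpa using hV.flatten_replicate 2
  have hc2 : IsConj (chi (FreeGroup.mk (V ++ V))) (φ (u ^ 2)) := by
    rw [← FreeGroup.mul_mk, ← pow_two, map_pow, map_pow]
    exact isConj_pow' hc.symm 2
  by_cases hch : List.IsChain (fun x y : Lt => x.2 ≠ y.2) (V ++ V)
  · rw [← Comm_Ch h]
    have hch' : List.IsChain (fun x y : Lt => y = nx x) (V ++ V) := by
      rw [List.isChain_iff_forall_rel_of_append_cons_cons] at *
      intro a b l1 l2 e
      have h1 := hch e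
      have h2 := (List.isChain_iff_forall_rel_of_append_cons_cons.1 hVV.1) e
      exact nx_of a b h1 h2
    obtain ⟨m, hm⟩ : Comm (chi (FreeGroup.mk V)) := by
      cases V with
      | nil => exact ⟨0, by simp [mk_nil]⟩
      | cons x V =>
        obtain ⟨m, hm⟩ := alt_pow x (x :: V)
          (List.IsChain.infix hch' ⟨[], V, by simp⟩) (by simp)
        rw [hm, map_pow]
        exact Comm_pow (chi_nx x) m
    exact ⟨m, hc.trans hm⟩
  · exfalso
    rw [List.isChain_iff_forall_rel_of_append_cons_cons] at hch
    push Not at hch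
    obtain ⟨c, d, X, Y, e, hcd⟩ := hch
    have hsq := cyclen_sq_le u
    cases hcb : c.2 with
    | true =>
      have hD := chi_D (PR_of hVV) e hcb (by rw [← hcd, hcb])
      have := bound h 1 2 2 le_rfl le_rfl hD hc2
      omega
    | false =>
      have e' : FreeGroup.invRev (V ++ V) = FreeGroup.invRev Y ++
          (d.1, !d.2) :: (c.1, !c.2) :: FreeGroup.invRev X := by
        rw [e]; simp [FreeGroup.invRev]
      have hD := chi_D (PR_inv (PR_of hVV)) e' (by simp [← hcd, hcb]) (by simp [hcb])
      have hc3 : IsConj (chi (FreeGroup.mk (FreeGroup.invRev (V ++ V)))) (φ (u ^ 2)⁻¹) := by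
        rw [← FreeGroup.inv_mk, map_inv, map_inv]
        exact isConj_inv' hc2
      have := bound h 1 2 2 le_rfl le_rfl hD hc3
      rw [cyclen_inv] at this
      omega

theorem Comm_of_Sg_Tg {w : F} (h1 : Sg w) (h2 : Tg w) : Comm w := by
  have hch : Ch (2 * cyclen w + 2) (σ ^ (2 * cyclen w + 2)) := by
    simpa using Ch_σ_pow Ch.one (2 * cyclen w + 2)
  refine key_growth hch (u := w) ?_ le_rfl
  rw [← MulAut.mul_apply, ← pow_succ']
  exact Tg_conj (Sg_pow_conj h1 _) h2

theorem main_σ {L : ℕ} {φ : MulAut F} (h : Ch L φ) {u v : F} (hv : cyclen v ≤ cyclen u)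
    (hL : 2 * cyclen u + 2 ≤ L) (h1 : Sg (φ u) ↔ Sg (φ v)) (h2 : Tg (φ u) ↔ Tg (φ v)) :
    (Sg (σ (φ u)) ↔ Sg (σ (φ v))) ∧ (Tg (σ (φ u)) ↔ Tg (σ (φ v))) := by
  refine ⟨by rw [Sg_σ, Sg_σ, h1], ?_, ?_⟩
  · intro hT
    have hu := (Comm_Ch h u).2 (key_growth h hT hL)
    have hv' := Comm_of_Sg_Tg (h1.1 (Sg_of_Comm hu)) (h2.1 (Tg_of_Comm hu))
    exact Tg_of_Comm ((Comm_Ch (Ch.s Ch.one) _).2 hv')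
  · intro hT
    have hu := (Comm_Ch h v).2 (key_growth h hT (by omega))
    have hv' := Comm_of_Sg_Tg (h1.2 (Sg_of_Comm hu)) (h2.2 (Tg_of_Comm hu))
    exact Tg_of_Comm ((Comm_Ch (Ch.s Ch.one) _).2 hv')

theorem main_τ {L : ℕ} {φ : MulAut F} (h : Ch L φ) {u v : F} (hv : cyclen v ≤ cyclen u)
    (hL : 2 * cyclen u + 2 ≤ L) (h1 : Sg (φ u) ↔ Sg (φ v)) (h2 : Tg (φ u) ↔ Tg (φ v)) :
    (Sg (τ (φ u)) ↔ Sg (τ (φ v))) ∧ (Tg (τ (φ u)) ↔ Tg (τ (φ v))) := by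
  have e : ∀ x, (sw * φ * sw) (sw x) = sw (φ x) := by
    intro x; simp [MulAut.mul_apply, sw_sw_apply]
  have e' : ∀ x, τ x = sw (σ (sw x)) := by intro x; rw [← sw_σ]; rfl
  have := main_σ (Ch_sw h) (u := sw u) (v := sw v) (by simpa [cyclen_sw] using hv)
    (by simpa [cyclen_sw] using hL) (by rw [e, e, Sg_sw, Sg_sw, h2]) (by rw [e, e, Tg_sw, Tg_sw, h1])
  rw [e, e] at this
  rw [e', e', Sg_sw, Sg_sw, Tg_sw, Tg_sw]
  exact ⟨this.2, this.1⟩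

/-! ### Syllable decompositions -/

/-- The `a`-letter with a given sign. -/
def al (e : Bool) : F := if e then ga else ga⁻¹

/-- Evaluation of a list of syllables `b ^ j * a ^ (± 1)`. -/
def E : List (Bool × ℤ) → F
  | [] => 1
  | x :: t => gb ^ x.2 * al x.1 * E t

def lst : Bool → List (Bool × ℤ) → Bool
  | p, [] => p
  | _, x :: t => lst x.1 t

def good : Bool → List (Bool × ℤ) → Prop
  | _, [] => True
  | p, x :: t => (p ≠ x.1 → x.2 ≠ 0) ∧ good x.1 t

theorem E_append (s t : List (Bool × ℤ)) : E (s ++ t) = E s * E t := by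
  induction s with
  | nil => simp [E]
  | cons x s ih => simp [E, ih, mul_assoc]

theorem lst_append (p : Bool) (s t : List (Bool × ℤ)) : lst p (s ++ t) = lst (lst p s) t := by
  induction s generalizing p with
  | nil => rfl
  | cons x s ih => exact ih _

theorem conj_swap (x y : F) : IsConj (x * y) (y * x) :=
  isConj_iff.2 ⟨y, by group⟩

theorem E_rot (s t : List (Bool × ℤ)) : IsConj (E (s ++ t)) (E (t ++ s)) := by
  rw [E_append, E_append]; exact conj_swap _ _

theorem bad_pos {p : Bool} {s : List (Bool × ℤ)} (h : ¬ good p s) :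
    ∃ l1 x l2, s = l1 ++ x :: l2 ∧ lst p l1 ≠ x.1 ∧ x.2 = 0 := by
  induction s generalizing p with
  | nil => exact absurd trivial h
  | cons x s ih =>
    by_cases h1 : p ≠ x.1 → x.2 ≠ 0
    · have h2 : ¬ good x.1 s := fun h2 => h ⟨h1, h2⟩
      obtain ⟨l1, y, l2, e, h3, h4⟩ := ih h2
      exact ⟨x :: l1, y, l2, by rw [e]; rfl, h3, h4⟩
    · push Not at h1
      exact ⟨[], x, s, rfl, h1.1, h1.2⟩

/-- Normal form: `w` is conjugate to a power of `b` or to a list of syllables of length `n`. -/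
def NF (w : F) (n : ℕ) : Prop := (∃ j : ℤ, IsConj w (gb ^ j)) ∨
  ∃ s : List (Bool × ℤ), s ≠ [] ∧ s.length = n ∧ IsConj w (E s)

theorem pre_b (j : ℤ) (s : List (Bool × ℤ)) (hs : s ≠ []) :
    ∃ s', s' ≠ [] ∧ s'.length = s.length ∧ gb ^ j * E s = E s' := by
  cases s with
  | nil => exact absurd rfl hs
  | cons x s => exact ⟨(x.1, j + x.2) :: s, by simp, by simp, by simp [E, zpow_add, mul_assoc]⟩

theorem al_not (e : Bool) : al e * al (!e) = 1 := by cases e <;> simp [al]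

theorem reduce_step {w : F} {s : List (Bool × ℤ)} (hs : s ≠ []) (hw : IsConj w (E s))
    (h : ¬ good (lst true s) s) : ∃ n < s.length, NF w n := by
  have key : ∃ y x m, s.length = m.length + 2 ∧ IsConj (E s) (E (y :: x :: m)) ∧ y.1 ≠ x.1 ∧
      x.2 = 0 := by
    obtain ⟨l1, x, l2, e, h1, h2⟩ := bad_pos h
    rcases List.eq_nil_or_concat l1 with rfl | ⟨m, y, rfl⟩
    · rcases List.eq_nil_or_concat l2 with rfl | ⟨m, y, rfl⟩
      · exfalso; apply h1; rw [e]; rfl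
      · refine ⟨y, x, m, by simp [e], ?_, ?_, h2⟩
        · rw [e]
          simpa using E_rot (x :: m) [y]
        · rw [e] at h1
          simpa [lst, lst_append] using h1
    · refine ⟨y, x, l2 ++ m, by simp [e]; omega, ?_, ?_, h2⟩
      · rw [e]
        simpa using E_rot m (y :: x :: l2)
      · simpa [lst, lst_append] using h1
  obtain ⟨y, x, m, hl, hc, h1, h2⟩ := key
  have e : E (y :: x :: m) = gb ^ y.2 * E m := by
    have : x.1 = !y.1 := by revert h1; cases x.1 <;> cases y.1 <;> simp
    simp only [E, h2, this]
    have := al_not y.1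
    simp only [zpow_zero, one_mul, mul_assoc]
    rw [← mul_assoc (al y.1), this, one_mul]
  rw [e] at hc
  refine ⟨m.length, by omega, ?_⟩
  by_cases hm : m = []
  · subst hm
    exact Or.inl ⟨y.2, by simpa [E] using hw.trans hc⟩
  · obtain ⟨s', h3, h4, h5⟩ := pre_b y.2 m hm
    rw [h5] at hc
    exact Or.inr ⟨s', h3, h4, hw.trans hc⟩

theorem exists_NF (w : F) : ∃ n, NF w n := by
  have h : ∃ (j : ℤ) (s : List (Bool × ℤ)), w = E s * gb ^ j := by
    rw [← FreeGroup.mk_toWord (x := w)]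
    induction w.toWord with
    | nil => exact ⟨0, [], by simp [E, mk_nil]⟩
    | cons x t ih =>
      obtain ⟨j, s, h⟩ := ih
      rw [mk_cons, h]
      have hb : ∀ i : ℤ, ∃ (j' : ℤ) (s' : List (Bool × ℤ)), gb ^ i * (E s * gb ^ j) = E s' * gb ^ j' := by
        intro i
        by_cases hs : s = []
        · subst hs; exact ⟨i + j, [], by simp [E, zpow_add]⟩
        · obtain ⟨s', _, _, h'⟩ := pre_b i s hs
          exact ⟨j, s', by rw [← mul_assoc, h']⟩
      rcases lt_cases x with rfl | rfl | rfl | rfl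
      · exact ⟨j, (true, 0) :: s, by simp [mk0t, E, al, mul_assoc]⟩
      · exact ⟨j, (false, 0) :: s, by simp [mk0f, E, al, mul_assoc]⟩
      · rw [mk1t]; simpa using hb 1
      · rw [mk1f]; simpa using hb (-1)
  obtain ⟨j, s, rfl⟩ := h
  by_cases hs : s = []
  · subst hs; exact ⟨0, Or.inl ⟨j, by rw [E, one_mul]⟩⟩
  · obtain ⟨s', h1, h2, h3⟩ := pre_b j s hs
    exact ⟨_, Or.inr ⟨s', h1, rfl, h3 ▸ conj_swap _ _⟩⟩

theorem exists_good (w : F) : (∃ j : ℤ, IsConj w (gb ^ j)) ∨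
    ∃ s : List (Bool × ℤ), s ≠ [] ∧ good (lst true s) s ∧ IsConj w (E s) := by
  classical
  have hx := exists_NF w
  rcases Nat.find_spec hx with h | ⟨s, h1, h2, h3⟩
  · exact Or.inl h
  · right
    refine ⟨s, h1, ?_, h3⟩
    by_contra hg
    obtain ⟨n, hn, hN⟩ := reduce_step h1 h3 hg
    exact Nat.find_min hx (h2 ▸ hn) hN

/-! ### Flattening -/

def bl (j : ℤ) : List Lt := List.replicate j.natAbs (1, decide (0 < j))

def fl : List (Bool × ℤ) → List Lt
  | [] => []
  | x :: t => bl x.2 ++ (0, x.1) :: fl t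

theorem fl_append (s t : List (Bool × ℤ)) : fl (s ++ t) = fl s ++ fl t := by
  induction s with
  | nil => rfl
  | cons x s ih => simp [fl, ih]

theorem mk_replicate (n : ℕ) (x : Lt) : (FreeGroup.mk (List.replicate n x) : F)
    = (FreeGroup.mk [x]) ^ n := by
  induction n with
  | zero => simp [mk_nil]
  | succ n ih => rw [List.replicate_succ, mk_cons, ih, pow_succ']

theorem mk_bl (j : ℤ) : FreeGroup.mk (bl j) = gb ^ j := by
  rw [bl, mk_replicate]
  by_cases h : 0 < j
  · rw [decide_eq_true h, mk1t, ← zpow_natCast]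
    congr 1; omega
  · rw [decide_eq_false h, mk1f, ← zpow_natCast, inv_zpow, ← zpow_neg]
    congr 1; omega

theorem mk_fl (s : List (Bool × ℤ)) : FreeGroup.mk (fl s) = E s := by
  induction s with
  | nil => rfl
  | cons x s ih =>
    rw [fl, ← FreeGroup.mul_mk, mk_cons, ih, mk_bl, E, mul_assoc]
    congr 2
    cases x.1 <;> rfl

theorem red_repl (n : ℕ) (c : Lt) (l : List Lt) (h : FreeGroup.IsReduced l)
    (hl : ∀ y ∈ l.head?, c.1 ≠ y.1) : FreeGroup.IsReduced (List.replicate n c ++ l) := by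
  induction n with
  | zero => simpa using h
  | succ n ih =>
    rw [List.replicate_succ, List.cons_append]
    apply red_cons ih
    cases n with
    | zero => intro y hy e; exact absurd e (hl y (by simpa using hy))
    | succ n => intro y hy _; simp [List.replicate_succ] at hy; rw [hy]

theorem fl_red {p : Bool} {s : List (Bool × ℤ)} (h : good p s) :
    FreeGroup.IsReduced (((0, p) : Lt) :: fl s) := by
  induction s generalizing p with
  | nil => exact FreeGroup.IsReduced.singleton
  | cons x s ih =>
    have h1 := ih h.2
    rw [fl]
    apply red_cons (red_repl _ _ _ h1 (by simp))
    intro y hy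
    by_cases hx : x.2 = 0
    · rw [hx] at hy
      simp at hy
      subst hy
      intro _
      by_contra hp
      exact h.1 hp hx
    · obtain ⟨n, hn⟩ : ∃ n, x.2.natAbs = n + 1 := ⟨x.2.natAbs - 1, by omega⟩
      rw [hn] at hy
      simp [List.replicate_succ] at hy
      subst hy
      simp

theorem fl_last {s : List (Bool × ℤ)} (hs : s ≠ []) (p : Bool) :
    ((0, lst p s) : Lt) ∈ (fl s).getLast? := by
  rcases List.eq_nil_or_concat s with rfl | ⟨m, y, rfl⟩
  · exact absurd rfl hs
  · simp [lst_append, fl_append, lst, fl]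

theorem lst_indep {s : List (Bool × ℤ)} (hs : s ≠ []) (p q : Bool) : lst p s = lst q s := by
  cases s with
  | nil => exact absurd rfl hs
  | cons x s => rfl

theorem fl_cyc {s : List (Bool × ℤ)} (hs : s ≠ []) (h : good (lst true s) s) :
    FreeGroup.IsCyclicallyReduced (fl s) := by
  have h1 := fl_red h
  refine ⟨red_tail h1, ?_⟩
  intro a ha b hb
  have h2 := fl_last hs true
  have : a = (0, lst true s) := by
    rw [Option.mem_def] at h2 ha
    rw [h2] at ha; simpa using ha.symm
  subst this
  cases hf : fl s with
  | nil => rw [hf] at hb; simp at hb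
  | cons y l =>
    rw [hf] at hb h1
    simp at hb
    subst hb
    exact (FreeGroup.isReduced_cons_cons.1 h1).1

theorem cyclen_E {s : List (Bool × ℤ)} (hs : s ≠ []) (h : good (lst true s) s) :
    cyclen (E s) = (fl s).length := by
  rw [← mk_fl, cyclen_mk (fl_cyc hs h)]

/-! ### The action of powers of `σ` on syllables -/

def dl (n : ℕ) (p e : Bool) : ℤ := (if p then (n : ℤ) else 0) - (if e then 0 else (n : ℤ))

def upd (n : ℕ) : Bool → List (Bool × ℤ) → List (Bool × ℤ)
  | _, [] => []
  | p, x :: t => (x.1, x.2 + dl n p x.1) :: upd n x.1 t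

def hh (n : ℕ) (p : Bool) : ℤ := if p then (n : ℤ) else 0

theorem σ_pow_b (n : ℕ) : (σ ^ n) gb = gb := by
  induction n with
  | zero => rfl
  | succ n ih => rw [pow_succ', MulAut.mul_apply, ih, σ_b]

theorem σ_pow_a (n : ℕ) : (σ ^ n) ga = ga * gb ^ n := by
  induction n with
  | zero => simp
  | succ n ih => rw [pow_succ', MulAut.mul_apply, ih, map_mul, map_pow, σ_a, σ_b, pow_succ']; group

theorem σ_pow_al (n : ℕ) (e : Bool) :
    (σ ^ n) (al e) = gb ^ (-(if e then 0 else (n : ℤ))) * al e * gb ^ hh n e := by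
  cases e
  · simp only [al, hh, map_inv, σ_pow_a, Bool.false_eq_true, if_false]
    group
  · simp [al, hh, σ_pow_a]

theorem σ_pow_E (n : ℕ) (p : Bool) (s : List (Bool × ℤ)) :
    (σ ^ n) (E s) = gb ^ (- hh n p) * E (upd n p s) * gb ^ hh n (lst p s) := by
  induction s generalizing p with
  | nil => simp [E, upd, lst]
  | cons x s ih =>
    rw [E, map_mul, map_mul, map_zpow, σ_pow_b, σ_pow_al, ih x.1, upd, lst, E]
    simp only [dl]
    rw [show (if p then (n : ℤ) else 0) = hh n p from rfl]
    generalize hh n x.1 = A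
    generalize hh n p = B
    generalize (if x.1 then (0 : ℤ) else n) = C
    group

theorem upd_lst (n : ℕ) (p : Bool) (s : List (Bool × ℤ)) (q : Bool) : lst q (upd n p s) = lst q s := by
  induction s generalizing p q with
  | nil => rfl
  | cons x s ih => exact ih _ _

theorem upd_ne (n : ℕ) (p : Bool) {s : List (Bool × ℤ)} (hs : s ≠ []) : upd n p s ≠ [] := by
  cases s with
  | nil => exact absurd rfl hs
  | cons x s => simp [upd]

theorem upd_good (n : ℕ) {p : Bool} {s : List (Bool × ℤ)} (h : good p s) : good p (upd n p s) := by
  induction s generalizing p with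
  | nil => trivial
  | cons x s ih =>
    refine ⟨?_, ih h.2⟩
    intro hp
    have := h.1 hp
    revert hp
    simp only [dl]
    cases p <;> cases x.1 <;> simp [this]

theorem cyclen_σ_pow {w : F} {s : List (Bool × ℤ)} (hs : s ≠ []) (h : good (lst true s) s)
    (hw : IsConj w (E s)) (n : ℕ) :
    cyclen ((σ ^ n) w) = (fl (upd n (lst true s) s)).length := by
  have h1 := isConj_map (σ ^ n) hw
  rw [σ_pow_E n (lst true s), lst_indep hs (lst true s) true] at h1
  have h2 : IsConj (gb ^ (-hh n (lst true s)) * E (upd n (lst true s) s) * gb ^ hh n (lst true s))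
      (E (upd n (lst true s) s)) := isConj_iff.2 ⟨gb ^ hh n (lst true s), by group⟩
  rw [cyclen_conj (h1.trans h2)]
  apply cyclen_E (upd_ne _ _ hs)
  rw [upd_lst]
  exact upd_good n h

/-! ### Alternating signs -/

def alt : Bool → List (Bool × ℤ) → Prop
  | _, [] => True
  | p, x :: t => p ≠ x.1 ∧ alt x.1 t

def pre (p : Bool) : F := if p then ga else 1

theorem alt_range {p : Bool} {s : List (Bool × ℤ)} (h : alt p s) :
    pre p * E s * (pre (lst p s))⁻¹ ∈ (FreeGroup.lift ![gb, ga * gb * ga⁻¹]).range := by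
  induction s generalizing p with
  | nil => simp [E, lst, one_mem]
  | cons x s ih =>
    have h2 := ih h.2
    have e : pre p * E (x :: s) * (pre (lst p (x :: s)))⁻¹ =
        (pre p * gb ^ x.2 * al x.1 * (pre x.1)⁻¹) * (pre x.1 * E s * (pre (lst x.1 s))⁻¹) := by
      rw [E, lst]; group
    rw [e]
    refine mul_mem ?_ h2
    have h1 := h.1
    revert h1
    cases p <;> cases x.1 <;> intro h1
    · exact absurd rfl h1
    · refine ⟨(FreeGroup.of 0) ^ x.2, ?_⟩
      rw [map_zpow]; simp [pre, al]
    · refine ⟨(FreeGroup.of 1) ^ x.2, ?_⟩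
      rw [map_zpow]; simp [pre, al]
    · exact absurd rfl h1

theorem Sg_of_alt {w : F} {s : List (Bool × ℤ)} (hs : s ≠ []) (h : alt (lst true s) s)
    (hw : IsConj w (E s)) : Sg w := by
  obtain ⟨W, hW⟩ := alt_range h
  refine ⟨W, hw.trans ?_⟩
  rw [hW, lst_indep hs (lst true s) true]
  exact isConj_iff.2 ⟨_, rfl⟩

/-! ### Growth -/

def sm (k : ℕ) : Bool → List (Bool × ℤ) → Prop
  | _, [] => True
  | p, x :: t => (p = x.1 → (x.1 = true → -(k : ℤ) ≤ x.2) ∧ (x.1 = false → x.2 ≤ k)) ∧ sm k x.1 t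

theorem not_sm {k : ℕ} {p : Bool} {s : List (Bool × ℤ)} (h : ¬ sm k p s) :
    ∃ l1 x l2, s = l1 ++ x :: l2 ∧
      ((x.1 = true ∧ x.2 < -(k : ℤ)) ∨ (x.1 = false ∧ (k : ℤ) < x.2)) := by
  induction s generalizing p with
  | nil => exact absurd trivial h
  | cons x s ih =>
    by_cases h1 : p = x.1 → (x.1 = true → -(k : ℤ) ≤ x.2) ∧ (x.1 = false → x.2 ≤ k)
    · have h2 : ¬ sm k x.1 s := fun h2 => h ⟨h1, h2⟩
      obtain ⟨l1, y, l2, e, h3⟩ := ih h2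
      exact ⟨x :: l1, y, l2, by rw [e]; rfl, h3⟩
    · refine ⟨[], x, s, rfl, ?_⟩
      by_contra h3
      push Not at h3
      exact h1 fun _ => h3

theorem fl_len_cons (x : Bool × ℤ) (s : List (Bool × ℤ)) :
    (fl (x :: s)).length = x.2.natAbs + 1 + (fl s).length := by
  simp [fl, bl]; omega

theorem sm_growth {k : ℕ} {p : Bool} {s : List (Bool × ℤ)} (h : sm k p s) :
    (fl (upd k p s)).length ≤ (fl (upd (k + 1) p s)).length ∧
    (¬ alt p s → (fl (upd k p s)).length < (fl (upd (k + 1) p s)).length) := by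
  induction s generalizing p with
  | nil => exact ⟨le_rfl, fun h' => absurd trivial h'⟩
  | cons x s ih =>
    obtain ⟨h1, h2⟩ := ih h.2
    have h3 := h.1
    simp only [upd, fl_len_cons, dl]
    have ha : alt p (x :: s) ↔ p ≠ x.1 ∧ alt x.1 s := Iff.rfl
    rw [ha]
    revert h1 h2 h3
    obtain ⟨e, j⟩ := x
    simp only
    generalize alt e s = Q
    cases p <;> cases e <;> simp only [ne_eq, not_true_eq_false, false_and, not_false_eq_true,
      true_and, if_true, if_false, Bool.false_eq_true, reduceCtorEq, forall_true_left,
      false_implies, and_true] <;> intro h1 h2 <;> try intro h3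
    · constructor
      · omega
      · omega
    · exact ⟨by omega, fun hq => by have := h2 hq; omega⟩
    · push_cast
      exact ⟨by omega, fun hq => by have := h2 hq; omega⟩
    · constructor
      · omega
      · omega

theorem L1 {L : ℕ} {φ : MulAut F} (h : Ch L φ) {u : F} {k : ℕ} (hk : cyclen u ≤ k) :
    cyclen ((σ ^ (k + 1)) (φ u)) = cyclen ((σ ^ k) (φ u)) ↔ Sg (φ u) := by
  constructor
  · intro heq
    rcases exists_good (φ u) with ⟨j, hj⟩ | ⟨s, hs, hg, hw⟩
    · exact ⟨(FreeGroup.of 0) ^ j, by rw [map_zpow]; simpa using hj⟩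
    · rw [cyclen_σ_pow hs hg hw, cyclen_σ_pow hs hg hw] at heq
      by_cases hsm : sm k (lst true s) s
      · by_cases ha : alt (lst true s) s
        · exact Sg_of_alt hs ha hw
        · have := (sm_growth hsm).2 ha
          omega
      · exfalso
        obtain ⟨l1, x, l2, e, hx⟩ := not_sm hsm
        have hPR := PR_of (fl_cyc hs hg)
        have hw' : IsConj (FreeGroup.mk (fl s)) (φ u) := by rw [mk_fl]; exact hw.symm
        have efl : fl s = fl l1 ++ ((bl x.2 ++ [(0, x.1)]) ++ fl l2) := by
          rw [e, fl_append, fl]; simp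
        rcases hx with ⟨hx1, hx2⟩ | ⟨hx1, hx2⟩
        · rw [efl] at hPR hw'
          have hb : bl x.2 = List.replicate x.2.natAbs (1, false) := by
            rw [bl, decide_eq_false (by omega)]
          rw [hb, hx1] at hPR hw'
          have hD := D_pow (p := 1) (q := k + 1) hPR
            (by intro y hy; simp at hy; rcases hy with hy | hy
                · exact Or.inr hy.2
                · exact Or.inl hy)
            (by simp [cA]) (by simp [cB]; omega)
          have := bound h 0 1 (k + 1) (by omega) (by omega) hD hw'
          omega
        · have hPR' := PR_inv hPR
          have hw2 := isConj_inv' hw'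
          rw [FreeGroup.inv_mk, ← map_inv] at hw2
          have hb : bl x.2 = List.replicate x.2.natAbs (1, true) := by
            rw [bl, decide_eq_true (by omega)]
          have efl' : FreeGroup.invRev (fl s) = FreeGroup.invRev (fl l2) ++
              (((0, true) :: List.replicate x.2.natAbs (1, false)) ++ FreeGroup.invRev (fl l1)) := by
            rw [efl, hb, hx1]; simp [FreeGroup.invRev]
          rw [efl'] at hPR' hw2
          have hD := D_pow (p := 1) (q := k + 1) hPR'
            (by intro y hy; simp at hy; rcases hy with hy | hy
                · exact Or.inl hy
                · exact Or.inr hy.2)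
            (by simp [cA]) (by simp [cB]; omega)
          have := bound h 0 1 (k + 1) (by omega) (by omega) hD hw2
          rw [cyclen_inv] at this
          omega
  · intro hS
    rw [cyclen_conj (Sg_pow_conj hS (k + 1)), cyclen_conj (Sg_pow_conj hS k)]

theorem τ_pow_sw (n : ℕ) (x : F) : (τ ^ n) x = sw ((σ ^ n) (sw x)) := by
  induction n with
  | zero => simp [sw_sw_apply]
  | succ n ih =>
    rw [pow_succ', pow_succ', MulAut.mul_apply, MulAut.mul_apply, ih, ← sw_σ]
    simp [MulAut.mul_apply, sw_sw_apply]

theorem L2 {L : ℕ} {φ : MulAut F} (h : Ch L φ) {u : F} {k : ℕ} (hk : cyclen u ≤ k) :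
    cyclen ((τ ^ (k + 1)) (φ u)) = cyclen ((τ ^ k) (φ u)) ↔ Tg (φ u) := by
  have e : (sw * φ * sw) (sw u) = sw (φ u) := by simp [MulAut.mul_apply, sw_sw_apply]
  have := L1 (Ch_sw h) (u := sw u) (k := k) (by rw [cyclen_sw]; exact hk)
  rw [e, Sg_sw] at this
  rw [τ_pow_sw, τ_pow_sw, cyclen_sw, cyclen_sw, this]

theorem final (u v : F) (huv : cyclen v ≤ cyclen u) {L : ℕ} {φ : MulAut F} (h : Ch L φ)
    (hL : 2 * cyclen u + 3 ≤ L)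
    (H : ∀ n ψ, Ch n ψ → n < L → (Sg (ψ u) ↔ Sg (ψ v)) ∧ (Tg (ψ u) ↔ Tg (ψ v))) :
    (Sg (φ u) ↔ Sg (φ v)) ∧ (Tg (φ u) ↔ Tg (φ v)) := by
  cases h with
  | one => omega
  | s h =>
    obtain ⟨h1, h2⟩ := H _ _ h (by omega)
    exact main_σ h huv (by omega) h1 h2
  | t h =>
    obtain ⟨h1, h2⟩ := H _ _ h (by omega)
    exact main_τ h huv (by omega) h1 h2

end P8


/-- Corollary 4.4.5:  here `k = ‖u‖ + 1`. -/
theorem stmt8 (u v : F) (huv : cyclen v ≤ cyclen u)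
    (c : List (ℕ × ℕ)) (hne : c ≠ []) (hlen : 2 * cyclen u + 3 ≤ chainLen c)
    (H : ∀ c' : List (ℕ × ℕ), c' ≠ [] → chainLen c' < chainLen c →
      ((cyclen ((σ ^ (cyclen u + 2)) (chainC1 c' u)) = cyclen ((σ ^ (cyclen u + 1)) (chainC1 c' u)) ↔
        cyclen ((σ ^ (cyclen u + 2)) (chainC1 c' v)) = cyclen ((σ ^ (cyclen u + 1)) (chainC1 c' v))) ∧
       (cyclen ((τ ^ (cyclen u + 2)) (chainC1 c' u)) = cyclen ((τ ^ (cyclen u + 1)) (chainC1 c' u)) ↔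
        cyclen ((τ ^ (cyclen u + 2)) (chainC1 c' v)) = cyclen ((τ ^ (cyclen u + 1)) (chainC1 c' v))))) :
    (cyclen ((σ ^ (cyclen u + 2)) (chainC1 c u)) = cyclen ((σ ^ (cyclen u + 1)) (chainC1 c u)) ↔
      cyclen ((σ ^ (cyclen u + 2)) (chainC1 c v)) = cyclen ((σ ^ (cyclen u + 1)) (chainC1 c v))) ∧
    (cyclen ((τ ^ (cyclen u + 2)) (chainC1 c u)) = cyclen ((τ ^ (cyclen u + 1)) (chainC1 c u)) ↔
      cyclen ((τ ^ (cyclen u + 2)) (chainC1 c v)) = cyclen ((τ ^ (cyclen u + 1)) (chainC1 c v))) := by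
  have h0 := P8.Ch_chain c
  have hk : cyclen u ≤ cyclen u + 1 := by omega
  have hk' : cyclen v ≤ cyclen u + 1 := by omega
  rw [P8.L1 h0 hk, P8.L1 h0 hk', P8.L2 h0 hk, P8.L2 h0 hk']
  refine P8.final u v huv h0 hlen ?_
  intro n ψ hψ hn
  obtain ⟨c', h1, h2, rfl⟩ := P8.chain_of_Ch hψ
  have h3 := H c' h1 (by omega)
  rw [P8.L1 hψ hk, P8.L1 hψ hk', P8.L2 hψ hk, P8.L2 hψ hk'] at h3
  exact h3
end
end
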